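/- arXiv:2506.07115 — 2 statements merged into one kernel-verified Lean document; each statement's English description precedes it below -/
import Mathlib

section
/- Let t ≥ 0 and n ≥ 15t + 57 be integers, and set r = C(t,2) + t(n−t) + ⌊(n−t)²/4⌋ + 2. Then every edge-coloring of the complete graph K_n using exactly r colors contains t+2 pairwise vertex-disjoint triangles whose 3(t+2) edges receive pairwise distinct colors. -/
/-- The edge-coloring `c` of `K_n` uses exactly `r` colors: every edge gets a color in
`{0, ..., r-1}` and each of the `r` colors appears on at least one edge. -/
def UsesExactly (n r : ℕ) (c : Sym2 (Fin n) → ℕ) : Prop :=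
  (∀ e ∈ (⊤ : SimpleGraph (Fin n)).edgeSet, c e < r) ∧
  ∀ j < r, ∃ e ∈ (⊤ : SimpleGraph (Fin n)).edgeSet, c e = j

/-- `G` contains `k` pairwise vertex-disjoint triangles whose `3k` edges receive pairwise
distinct colors under `c`: a rainbow copy of `k·K₃`. -/
def RainbowIndepTrianglesIn {V : Type*} (G : SimpleGraph V) (k : ℕ)
    (c : Sym2 V → ℕ) : Prop :=
  ∃ f : Fin k → Fin 3 → V,
    Function.Injective (fun p : Fin k × Fin 3 => f p.1 p.2) ∧
    (∀ i, G.Adj (f i 0) (f i 1) ∧ G.Adj (f i 1) (f i 2) ∧ G.Adj (f i 0) (f i 2)) ∧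
    Function.Injective (fun p : Fin k × Fin 3 => c s(f p.1 p.2, f p.1 (p.2 + 1)))

/-!
Choose one edge of each colour: this gives a rainbow graph `G` with at least `r` edges. If `e` is
any pair of vertices, adding `e` to `G` and deleting the edge of its colour leaves a rainbow graph,
`swapEdge G c e`, so it suffices to find `e` for which this graph has `t + 2` disjoint triangles.
We argue by induction on `t`, within vertex sets `W` with many edges of `G`.

For `t = 0` Mantel's theorem gives a triangle of `G[W]` after the loss of any one edge; all the
triangles needed for this lie in a set `Z` of at most 12 vertices. Outside `Z` the graph is still
so dense that two vertices `p`, `q` have two common neighbours. With `e = pq`, at least one of the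
two triangles on `e` and at least one triangle in `Z` survive the loss of an edge.

For the step, let `P` be a largest triangle packing of `G[W]`, and `R` the triangle-free rest. If
some vertex `x` covered by `P` has a neighbourhood in `R` of large vertex cover number, then induct
on `W \ {x}`: among the many edges in that neighbourhood one extends the packing found by a
triangle through `x`. Otherwise `G[W]` has too few edges. Indeed a vertex has at most `α + τ`
neighbours in `R`, where `α` is the independence number of `G[R]` and `τ` the vertex cover number
of its neighbourhood, and by maximality of `P` at most one vertex of a triangle of `P` has `τ > 2`,
in which case the other two have `τ = 0`.
-/

namespace AntiRamsey

open Finset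

variable {V : Type*} {G : SimpleGraph V} {A B F R S T W : Finset V}

/-! ### Counting edges -/

section Counting

variable [DecidableRel G.Adj]

variable (G) in
/-- The neighbourhood `N_A(v)` of `v` inside `A`. -/
abbrev nbrsIn (A : Finset V) (v : V) : Finset V := A.filter (G.Adj v)

lemma card_interedges_eq_sum : #(G.interedges A B) = ∑ v ∈ A, #(nbrsIn G B v) := by
  simp only [SimpleGraph.interedges_def, card_filter, sum_product]

lemma card_interedges_eq_zero (hA : G.IsIndepSet A) : #(G.interedges A A) = 0 := by
  rw [card_eq_zero, eq_empty_iff_forall_notMem]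
  rintro ⟨u, v⟩ huv
  rw [SimpleGraph.mk_mem_interedges_iff] at huv
  exact hA huv.1 huv.2.1 huv.2.2.ne huv.2.2

lemma card_interedges_comm : #(G.interedges A B) = #(G.interedges B A) :=
  have := G.symm
  Rel.card_interedges_comm _ _

variable [DecidableEq V]

lemma card_interedges_sdiff_add (hT : T ⊆ B) :
    #(G.interedges A (B \ T)) + #(G.interedges A T) = #(G.interedges A B) := by
  simp only [card_interedges_eq_sum, ← sum_add_distrib]
  refine sum_congr rfl fun v _ => ?_
  rw [← card_union_of_disjoint (disjoint_filter_filter sdiff_disjoint), ← filter_union,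
    sdiff_union_of_subset hT]

lemma card_interedges_self_eq_sdiff (hT : T ⊆ W) :
    #(G.interedges W W) = #(G.interedges (W \ T) (W \ T)) + 2 * #(G.interedges T (W \ T)) +
      #(G.interedges T T) := by
  rw [← card_interedges_sdiff_add hT, card_interedges_comm (B := W \ T),
    card_interedges_comm (B := T), ← card_interedges_sdiff_add hT,
    ← card_interedges_sdiff_add (A := T) hT, card_interedges_comm (A := W \ T) (B := T)]
  ring

lemma card_interedges_self_le_erase_add (x : V) (hx : x ∈ W) :
    #(G.interedges W W) ≤ #(G.interedges (W.erase x) (W.erase x)) + 2 * #(W.erase x) := by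
  have hsplit := card_interedges_self_eq_sdiff (G := G) (singleton_subset_iff.2 hx)
  have hloop : #(G.interedges {x} {x}) = 0 :=
    card_interedges_eq_zero (by simp [SimpleGraph.IsIndepSet])
  have hdeg : #(G.interedges {x} (W \ {x})) ≤ #(W \ {x}) := by
    simpa using G.card_interedges_le_mul {x} (W \ {x})
  rw [sdiff_singleton_eq_erase] at hsplit hdeg
  omega

lemma card_interedges_le_of_isIndepSet {d : ℕ} (hA : G.IsIndepSet A) (hAR : A ⊆ R)
    (hd : ∀ v ∈ R, #(nbrsIn G R v) ≤ d) :
    #(G.interedges R R) ≤ 2 * (d * #(R \ A)) := by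
  have hdeg : #(G.interedges (R \ A) R) ≤ #(R \ A) * d := by
    rw [card_interedges_eq_sum]
    exact sum_le_card_nsmul _ _ _ fun v hv => hd v (sdiff_subset hv)
  rw [← card_interedges_sdiff_add hAR, card_interedges_comm (B := A)] at hdeg
  rw [card_interedges_self_eq_sdiff hAR, card_interedges_eq_zero hA]
  linarith

end Counting

/-! ### Vertex covers -/

variable (G) in
/-- The vertex cover number of `G[S]`: the least number of vertices meeting every edge inside
`S`. -/
noncomputable def coverNum (S : Finset V) : ℕ :=
  sInf {k | ∃ F : Finset V, #F = k ∧ G.IsIndepSet (S \ F : Set V)}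

lemma coverNum_le (h : G.IsIndepSet (S \ F : Set V)) : coverNum G S ≤ #F :=
  Nat.sInf_le ⟨F, rfl, h⟩

variable (G S) in
lemma exists_card_eq_coverNum :
    ∃ F : Finset V, #F = coverNum G S ∧ G.IsIndepSet (S \ F : Set V) :=
  Nat.sInf_mem (s := {k | ∃ F : Finset V, #F = k ∧ G.IsIndepSet (S \ F : Set V)})
    ⟨#S, S, rfl, by simp [SimpleGraph.IsIndepSet]⟩

lemma exists_adj_of_card_lt_coverNum (h : #F < coverNum G S) :
    ∃ a ∈ S, ∃ b ∈ S, a ∉ F ∧ b ∉ F ∧ G.Adj a b := by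
  by_contra! hF
  exact h.not_ge <| coverNum_le fun a ha b hb _ => hF a ha.1 b hb.1 ha.2 hb.2

lemma card_le_add_coverNum {m : ℕ} (h : ∀ I ⊆ S, G.IsIndepSet I → #I ≤ m) :
    #S ≤ m + coverNum G S := by
  obtain ⟨F, hF, hind⟩ := exists_card_eq_coverNum G S
  classical
  have hSF : #(S \ F) ≤ m := h _ sdiff_subset (by simpa using hind)
  have := le_card_sdiff F S
  omega

variable (G R) in
lemma exists_isIndepSet_max :
    ∃ A ⊆ R, G.IsIndepSet A ∧ ∀ I ⊆ R, G.IsIndepSet I → #I ≤ #A := by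
  classical
  obtain ⟨A, hA, hmax⟩ := exists_max_image (R.powerset.filter fun A : Finset V => G.IsIndepSet A)
    card ⟨∅, by simp [SimpleGraph.IsIndepSet]⟩
  simp only [mem_filter, mem_powerset, and_imp] at hA hmax
  exact ⟨A, hA.1, hA.2, hmax⟩

section Counting

variable [DecidableRel G.Adj]

lemma isIndepSet_nbrsIn (hR : G.CliqueFreeOn R 3) {v : V} (hv : v ∈ R) :
    G.IsIndepSet (nbrsIn G R v) := by
  classical
  intro a ha b hb _ hab
  rw [mem_coe, mem_filter] at ha hb
  refine hR (t := {v, a, b}) ?_ (SimpleGraph.is3Clique_triple_iff.2 ⟨ha.2, hb.2, hab⟩)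
  simp [Set.insert_subset_iff, *]

variable [DecidableEq V]

lemma exists_insert_isNClique {x : V} (h : #F < coverNum G (nbrsIn G R x)) :
    ∃ E ⊆ R \ F, #E = 2 ∧ G.IsNClique 3 (insert x E) := by
  obtain ⟨a, ha, b, hb, haF, hbF, hab⟩ := exists_adj_of_card_lt_coverNum h
  rw [mem_filter] at ha hb
  refine ⟨{a, b}, by grind, card_pair hab.ne, ?_⟩
  exact SimpleGraph.is3Clique_triple_iff.2 ⟨ha.2, hb.2, hab⟩

theorem two_mul_card_interedges_le (hT : T ⊆ W) (hR : G.CliqueFreeOn (W \ T : Finset V) 3) :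
    2 * #(G.interedges W W) ≤ #W ^ 2 +
      2 * ∑ v ∈ T, (2 * coverNum G (nbrsIn G (W \ T) v) + #(nbrsIn G T v)) := by
  obtain ⟨A, hAR, hA, hmax⟩ := exists_isIndepSet_max G (W \ T)
  have hRR : #(G.interedges (W \ T) (W \ T)) ≤ 2 * (#A * #((W \ T) \ A)) :=
    card_interedges_le_of_isIndepSet hA hAR fun v hv =>
      hmax _ (filter_subset _ _) (isIndepSet_nbrsIn hR hv)
  have hTR : #(G.interedges T (W \ T)) ≤
      #T * #A + ∑ v ∈ T, coverNum G (nbrsIn G (W \ T) v) := by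
    rw [card_interedges_eq_sum, ← smul_eq_mul, ← sum_const, ← sum_add_distrib]
    exact sum_le_sum fun v _ =>
      card_le_add_coverNum fun I hI => hmax I (hI.trans (filter_subset _ _))
  have hW : #W = #A + #((W \ T) \ A) + #T := by
    have := card_sdiff_add_card_eq_card hAR
    have := card_sdiff_add_card_eq_card hT
    omega
  rw [card_interedges_self_eq_sdiff hT, sum_add_distrib, ← mul_sum, hW,
    card_interedges_eq_sum (A := T) (B := T)]
  -- AM-GM for `#A` and `#W - #A`
  nlinarith [four_mul_le_pow_two_add #A (#((W \ T) \ A) + #T)]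

end Counting

/-! ### Triangle packings -/

/-- `P` is a family of pairwise disjoint vertex sets of triangles of `G`, all inside `W`. -/
structure IsTrianglePacking (G : SimpleGraph V) (W : Finset V) (P : Finset (Finset V)) : Prop where
  subset : ∀ D ∈ P, D ⊆ W
  isNClique : ∀ D ∈ P, G.IsNClique 3 D
  pairwiseDisjoint : (P : Set (Finset V)).PairwiseDisjoint id

/-- `G[W]` contains `k` pairwise vertex-disjoint triangles. -/
def HasTrianglePacking (G : SimpleGraph V) (W : Finset V) (k : ℕ) : Prop :=
  ∃ P, IsTrianglePacking G W P ∧ #P = k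

variable {P Q : Finset (Finset V)} {D : Finset V} {j k : ℕ}

namespace HasTrianglePacking

lemma mono (hS : S ⊆ W) : HasTrianglePacking G S k → HasTrianglePacking G W k := by
  rintro ⟨P, hP, hk⟩
  exact ⟨P, ⟨fun D hD => (hP.subset D hD).trans hS, hP.isNClique, hP.pairwiseDisjoint⟩, hk⟩

lemma mono_graph {H : SimpleGraph V} (hGH : G ≤ H) :
    HasTrianglePacking G W k → HasTrianglePacking H W k := by
  rintro ⟨P, hP, hk⟩
  exact ⟨P, ⟨hP.subset, fun D hD => (hP.isNClique D hD).mono hGH, hP.pairwiseDisjoint⟩, hk⟩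

protected lemma zero : HasTrianglePacking G W 0 := ⟨∅, ⟨by simp, by simp, by simp⟩, rfl⟩

lemma of_isNClique (hD : G.IsNClique 3 D) : HasTrianglePacking G D 1 :=
  ⟨{D}, ⟨by simp, by simpa using hD, by simp⟩, card_singleton D⟩

variable [DecidableEq V]

lemma add (hS : HasTrianglePacking G S j) (hT : HasTrianglePacking G T k) (hST : Disjoint S T) :
    HasTrianglePacking G (S ∪ T) (j + k) := by
  obtain ⟨P, hP, rfl⟩ := hS
  obtain ⟨Q, hQ, rfl⟩ := hT
  have hPQ : ∀ D ∈ P, ∀ E ∈ Q, Disjoint D E := fun D hD E hE =>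
    hST.mono (hP.subset D hD) (hQ.subset E hE)
  have hdisj : Disjoint P Q := by
    refine disjoint_left.2 fun D hDP hDQ => ?_
    have hempty : D = ∅ := disjoint_self.1 (hPQ D hDP D hDQ)
    simpa [hempty] using (hP.isNClique D hDP).card_eq
  refine ⟨P ∪ Q, ⟨?_, ?_, ?_⟩, card_union_of_disjoint hdisj⟩
  · exact fun D hD => (mem_union.1 hD).elim (fun h => (hP.subset D h).trans subset_union_left)
      fun h => (hQ.subset D h).trans subset_union_right
  · exact fun D hD => (mem_union.1 hD).elim (hP.isNClique D) (hQ.isNClique D)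
  · rw [coe_union]
    exact hP.pairwiseDisjoint.union hQ.pairwiseDisjoint fun D hD E hE _ => hPQ D hD E hE

end HasTrianglePacking

lemma exists_maximal_isTrianglePacking (h : ¬ HasTrianglePacking G W k) :
    ∃ P, IsTrianglePacking G W P ∧ #P < k ∧ ¬ HasTrianglePacking G W (#P + 1) := by
  induction k with
  | zero => exact absurd .zero h
  | succ k ih =>
    by_cases hk : HasTrianglePacking G W k
    · obtain ⟨P, hP, rfl⟩ := hk
      exact ⟨P, hP, Nat.lt_succ_self _, h⟩
    · obtain ⟨P, hP, hlt, hmax⟩ := ih hk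
      exact ⟨P, hP, hlt.trans k.lt_succ_self, hmax⟩

namespace IsTrianglePacking

variable [DecidableEq V]

lemma mono (hP : IsTrianglePacking G W P) (hQ : Q ⊆ P) :
    IsTrianglePacking G (Q.biUnion id) Q :=
  ⟨fun _ hD => subset_biUnion_of_mem id hD, fun D hD => hP.isNClique D (hQ hD),
    hP.pairwiseDisjoint.subset (coe_subset.2 hQ)⟩

lemma biUnion_subset (hP : IsTrianglePacking G W P) : P.biUnion id ⊆ W :=
  Finset.biUnion_subset.2 hP.subset

lemma card_biUnion (hP : IsTrianglePacking G W P) : #(P.biUnion id) = 3 * #P := by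
  rw [Finset.card_biUnion hP.pairwiseDisjoint, mul_comm]
  exact sum_const_nat fun D hD => (hP.isNClique D hD).card_eq

lemma not_hasTrianglePacking_exchange (hP : IsTrianglePacking G W P)
    (hmax : ¬ HasTrianglePacking G W (#P + 1)) (hQ : Q ⊆ P) :
    ¬ HasTrianglePacking G ((W \ P.biUnion id) ∪ Q.biUnion id) (#Q + 1) := by
  intro hnew
  have hrest : HasTrianglePacking G ((P \ Q).biUnion id) #(P \ Q) :=
    ⟨P \ Q, hP.mono sdiff_subset, rfl⟩
  have hdisj : Disjoint ((P \ Q).biUnion id) ((W \ P.biUnion id) ∪ Q.biUnion id) := by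
    refine disjoint_union_right.2 ⟨disjoint_sdiff.mono_left (biUnion_subset_biUnion_of_subset_left _
      sdiff_subset), ?_⟩
    simp only [disjoint_biUnion_left, disjoint_biUnion_right, mem_sdiff]
    exact fun E hE D hD => hP.pairwiseDisjoint hD.1 (hQ hE) fun h => hD.2 (h ▸ hE)
  have hall := hrest.add hnew hdisj
  rw [← add_assoc, card_sdiff_add_card_eq_card hQ] at hall
  refine hmax (hall.mono (union_subset ?_ (union_subset sdiff_subset ?_)))
  · exact (biUnion_subset_biUnion_of_subset_left _ sdiff_subset).trans hP.biUnion_subset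
  · exact (biUnion_subset_biUnion_of_subset_left _ hQ).trans hP.biUnion_subset

lemma cliqueFreeOn_sdiff (hP : IsTrianglePacking G W P)
    (hmax : ¬ HasTrianglePacking G W (#P + 1)) :
    G.CliqueFreeOn (W \ P.biUnion id : Finset V) 3 := by
  intro D hD hclique
  have hnone := hP.not_hasTrianglePacking_exchange hmax (empty_subset P)
  rw [biUnion_empty, union_empty] at hnone
  exact hnone ((HasTrianglePacking.of_isNClique hclique).mono (coe_subset.1 hD))

end IsTrianglePacking

section Exchange

variable [DecidableEq V] [DecidableRel G.Adj] {x y : V}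

lemma coverNum_nbrsIn_eq_zero (hxy : x ≠ y) (hxR : x ∉ R) (hyR : y ∉ R)
    (hx : 2 < coverNum G (nbrsIn G R x))
    (hno : ¬ HasTrianglePacking G (insert x (insert y R)) 2) :
    coverNum G (nbrsIn G R y) = 0 := by
  by_contra hy
  obtain ⟨E, hER, hE, hyE⟩ := exists_insert_isNClique (F := ∅) (Nat.pos_of_ne_zero hy)
  obtain ⟨E', hER', -, hxE'⟩ := exists_insert_isNClique (hE ▸ hx)
  refine hno (((HasTrianglePacking.of_isNClique hxE').add (.of_isNClique hyE) ?_).mono ?_)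
  · grind [disjoint_left]
  · grind

lemma card_nbrsIn_le_two {x' : V} (hD : G.IsNClique 3 D) (hDR : Disjoint D R) (hxD : x ∈ D)
    (hx : 2 < coverNum G (nbrsIn G R x)) (hx' : 2 < coverNum G (nbrsIn G R x'))
    (hx'R : x' ∉ R ∪ D) (hyR : y ∉ R ∪ D) (hne : x' ≠ y)
    (hno : ¬ HasTrianglePacking G (insert x' (insert y (R ∪ D))) 3) :
    #(nbrsIn G D y) ≤ 2 := by
  by_contra! hy
  have hall : ∀ v ∈ D, G.Adj y v := by
    have := eq_of_subset_of_card_le (filter_subset (G.Adj y) D) (hD.card_eq ▸ hy)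
    exact filter_eq_self.1 this
  have hyD : G.IsNClique 3 (insert y (D.erase x)) :=
    (hD.erase_of_mem hxD).insert fun v hv => hall v (mem_of_mem_erase hv)
  obtain ⟨E, hER, hE, hxE⟩ := exists_insert_isNClique (F := ∅) (zero_lt_two.trans hx)
  obtain ⟨E', hER', -, hxE'⟩ := exists_insert_isNClique (hE ▸ hx')
  rw [disjoint_left] at hDR
  have htwo := (HasTrianglePacking.of_isNClique hyD).add (.of_isNClique hxE)
    (by grind [disjoint_left])
  refine hno ((htwo.add (.of_isNClique hxE') ?_).mono ?_)
  · grind [disjoint_left]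
  · grind

end Exchange

section Weights

variable [DecidableEq V] [DecidableRel G.Adj]

/-- A triangle is rich if one of its vertices keeps a neighbourhood in `R` whose edges cannot be
covered by two vertices. -/
def IsRich (G : SimpleGraph V) [DecidableRel G.Adj] (R D : Finset V) : Prop :=
  ∃ x ∈ D, 2 < coverNum G (nbrsIn G R x)

/-- The contribution of the triangle `D` of the packing `P` to the count of
`two_mul_card_interedges_le`, where `T` is the union of `P` and `R = W \ T`. -/
noncomputable def triangleWeight (G : SimpleGraph V) [DecidableRel G.Adj] (R T D : Finset V) : ℕ :=
  ∑ v ∈ D, (2 * coverNum G (nbrsIn G R v) + #(nbrsIn G T v))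

namespace IsTrianglePacking

variable {M : ℕ}

lemma card_nbrsIn_biUnion (hP : IsTrianglePacking G W P) (v : V) :
    #(nbrsIn G (P.biUnion id) v) = ∑ D ∈ P, #(nbrsIn G D v) := by
  rw [nbrsIn, filter_biUnion, Finset.card_biUnion]
  · rfl
  · exact fun D hD E hE hDE => disjoint_filter_filter (hP.pairwiseDisjoint hD hE hDE)

lemma card_nbrsIn_biUnion_le (hP : IsTrianglePacking G W P) (v : V) :
    #(nbrsIn G (P.biUnion id) v) ≤ 3 * #P :=
  (card_filter_le _ _).trans_eq hP.card_biUnion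

lemma triangleWeight_le_of_not_isRich (hP : IsTrianglePacking G W P) (hD : D ∈ P)
    (hpoor : ¬ IsRich G R D) :
    triangleWeight G R (P.biUnion id) D ≤ 9 * #P + 12 := by
  simp only [IsRich, not_exists, not_and, not_lt] at hpoor
  calc triangleWeight G R (P.biUnion id) D ≤ ∑ v ∈ D, (4 + 3 * #P) := by
        refine sum_le_sum fun v hv => add_le_add ?_ (hP.card_nbrsIn_biUnion_le v)
        have := hpoor v hv
        omega
    _ = 9 * #P + 12 := by
        rw [sum_const, (hP.isNClique D hD).card_eq, smul_eq_mul]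
        ring

lemma coverNum_eq_zero_of_mem (hP : IsTrianglePacking G W P)
    (hmax : ¬ HasTrianglePacking G W (#P + 1)) (hD : D ∈ P) {x y : V} (hxD : x ∈ D)
    (hx : 2 < coverNum G (nbrsIn G (W \ P.biUnion id) x)) (hy : y ∈ D) (hxy : x ≠ y) :
    coverNum G (nbrsIn G (W \ P.biUnion id) y) = 0 := by
  have hDT : ∀ v ∈ D, v ∉ W \ P.biUnion id := fun v hv hvR =>
    (mem_sdiff.1 hvR).2 (subset_biUnion_of_mem id hD hv)
  refine coverNum_nbrsIn_eq_zero hxy (hDT x hxD) (hDT y hy) hx fun htwo => ?_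
  refine hP.not_hasTrianglePacking_exchange hmax (singleton_subset_iff.2 hD) (htwo.mono ?_)
  rw [singleton_biUnion]
  grind

lemma card_nbrsIn_le_two_of_isRich (hP : IsTrianglePacking G W P)
    (hmax : ¬ HasTrianglePacking G W (#P + 1)) (hD : D ∈ P) {x y : V} (hxD : x ∈ D)
    (hx : 2 < coverNum G (nbrsIn G (W \ P.biUnion id) x)) (hy : y ∈ D) (hxy : x ≠ y)
    {D' : Finset V} (hD' : D' ∈ P) (hrich : IsRich G (W \ P.biUnion id) D') :
    #(nbrsIn G D' y) ≤ 2 := by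
  obtain rfl | hne := eq_or_ne D' D
  · have hsub : nbrsIn G D' y ⊆ D'.erase y := fun v hv =>
      mem_erase.2 ⟨(mem_filter.1 hv).2.ne', (mem_filter.1 hv).1⟩
    simpa [card_erase_of_mem hy, (hP.isNClique D' hD').card_eq] using card_le_card hsub
  obtain ⟨x', hx'D', hx'⟩ := hrich
  have hT : ∀ E ∈ P, ∀ v ∈ E, v ∉ W \ P.biUnion id := fun E hE v hv hvR =>
    (mem_sdiff.1 hvR).2 (subset_biUnion_of_mem id hE hv)
  have hDD' : ∀ v ∈ D, v ∉ D' := fun v hv => disjoint_right.1 (hP.pairwiseDisjoint hD' hD hne) hv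
  refine card_nbrsIn_le_two (hP.isNClique D' hD') (disjoint_left.2 (hT D' hD')) hx'D' hx' hx
    (notMem_union.2 ⟨hT D hD x hxD, hDD' x hxD⟩) (notMem_union.2 ⟨hT D hD y hy, hDD' y hy⟩) hxy
    fun hthree => ?_
  have hpair : #{D, D'} = 2 := card_pair hne.symm
  refine hP.not_hasTrianglePacking_exchange hmax (Q := {D, D'})
    (by simp [insert_subset_iff, hD, hD']) (hpair ▸ hthree.mono ?_)
  rw [biUnion_insert, singleton_biUnion]
  grind

lemma card_nbrsIn_biUnion_le_of_isRich [DecidablePred (IsRich G (W \ P.biUnion id))]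
    (hP : IsTrianglePacking G W P)
    (hmax : ¬ HasTrianglePacking G W (#P + 1)) (hD : D ∈ P) {x y : V} (hxD : x ∈ D)
    (hx : 2 < coverNum G (nbrsIn G (W \ P.biUnion id) x)) (hy : y ∈ D) (hxy : x ≠ y) :
    #(nbrsIn G (P.biUnion id) y) ≤
      2 * #{D ∈ P | IsRich G (W \ P.biUnion id) D} +
        3 * #{D ∈ P | ¬ IsRich G (W \ P.biUnion id) D} := by
  rw [hP.card_nbrsIn_biUnion, ← sum_filter_add_sum_filter_not P (IsRich G (W \ P.biUnion id)),
    mul_comm 2, mul_comm 3]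
  refine add_le_add (sum_le_card_nsmul _ _ _ fun E hE => ?_)
    (sum_le_card_nsmul _ _ _ fun E hE => ?_)
  · rw [mem_filter] at hE
    exact hP.card_nbrsIn_le_two_of_isRich hmax hD hxD hx hy hxy hE.1 hE.2
  · exact (card_filter_le _ _).trans_eq (hP.isNClique E (mem_filter.1 hE).1).card_eq

lemma triangleWeight_le_of_isRich [DecidablePred (IsRich G (W \ P.biUnion id))]
    (hP : IsTrianglePacking G W P)
    (hmax : ¬ HasTrianglePacking G W (#P + 1)) (hD : D ∈ P)
    (hM : ∀ v ∈ D, coverNum G (nbrsIn G (W \ P.biUnion id) v) ≤ M)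
    (hrich : IsRich G (W \ P.biUnion id) D) :
    triangleWeight G (W \ P.biUnion id) (P.biUnion id) D ≤
      2 * M + 3 * #P + 4 * #{D ∈ P | IsRich G (W \ P.biUnion id) D} +
        6 * #{D ∈ P | ¬ IsRich G (W \ P.biUnion id) D} := by
  obtain ⟨x, hxD, hx⟩ := hrich
  have hothers := sum_le_card_nsmul (D.erase x)
    (fun v => 2 * coverNum G (nbrsIn G (W \ P.biUnion id) v) + #(nbrsIn G (P.biUnion id) v)) _
    fun y hy => by
      rw [mem_erase] at hy
      rw [hP.coverNum_eq_zero_of_mem hmax hD hxD hx hy.2 hy.1.symm, mul_zero, zero_add]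
      exact hP.card_nbrsIn_biUnion_le_of_isRich hmax hD hxD hx hy.2 hy.1.symm
  rw [card_erase_of_mem hxD, (hP.isNClique D hD).card_eq, smul_eq_mul] at hothers
  have hMx := hM x hxD
  have hPx := hP.card_nbrsIn_biUnion_le x
  rw [triangleWeight, ← add_sum_erase D _ hxD]
  omega

lemma sum_triangleWeight_le (hP : IsTrianglePacking G W P)
    (hmax : ¬ HasTrianglePacking G W (#P + 1))
    (hM : ∀ v ∈ P.biUnion id, coverNum G (nbrsIn G (W \ P.biUnion id) v) ≤ M)
    (hPM : 2 * #P + 5 ≤ M) :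
    ∑ D ∈ P, triangleWeight G (W \ P.biUnion id) (P.biUnion id) D ≤ #P * (2 * M + 7 * #P) := by
  classical
  rw [← sum_filter_add_sum_filter_not P (IsRich G (W \ P.biUnion id))]
  have hrich := sum_le_card_nsmul _ _ _ fun D
      (hD : D ∈ P.filter (IsRich G (W \ P.biUnion id))) =>
    hP.triangleWeight_le_of_isRich hmax (mem_filter.1 hD).1
      (fun v hv => hM v (subset_biUnion_of_mem id (mem_filter.1 hD).1 hv)) (mem_filter.1 hD).2
  have hpoor := sum_le_card_nsmul _ _ _ fun D
      (hD : D ∈ P.filter fun D => ¬ IsRich G (W \ P.biUnion id) D) =>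
    hP.triangleWeight_le_of_not_isRich (mem_filter.1 hD).1 (mem_filter.1 hD).2
  refine (add_le_add hrich hpoor).trans ?_
  have hcard := card_filter_add_card_filter_not (s := P) (IsRich G (W \ P.biUnion id))
  generalize #{D ∈ P | IsRich G (W \ P.biUnion id) D} = k₁ at *
  generalize #{D ∈ P | ¬ IsRich G (W \ P.biUnion id) D} = k₀ at *
  rw [← hcard] at hPM ⊢
  simp only [smul_eq_mul]
  have hk₀ : k₀ ≤ k₀ * k₀ := Nat.le_mul_self k₀
  nlinarith [Nat.mul_le_mul_left k₀ hPM]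

theorem two_mul_card_interedges_le (hP : IsTrianglePacking G W P)
    (hmax : ¬ HasTrianglePacking G W (#P + 1))
    (hM : ∀ v ∈ P.biUnion id, coverNum G (nbrsIn G (W \ P.biUnion id) v) ≤ M)
    (hPM : 2 * #P + 5 ≤ M) :
    2 * #(G.interedges W W) ≤ #W ^ 2 + 2 * (#P * (2 * M + 7 * #P)) := by
  refine (AntiRamsey.two_mul_card_interedges_le hP.biUnion_subset
    (hP.cliqueFreeOn_sdiff hmax)).trans ?_
  rw [sum_biUnion hP.pairwiseDisjoint]
  exact Nat.add_le_add_left (Nat.mul_le_mul_left 2 (hP.sum_triangleWeight_le hmax hM hPM)) _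

end IsTrianglePacking

end Weights

/-! ### Pairs of vertices with two common neighbours -/

section CommonNeighbours

variable [DecidableEq V] [DecidableRel G.Adj]

lemma sum_card_inter_nbrsIn :
    ∑ p ∈ A, ∑ q ∈ A, #(nbrsIn G A p ∩ nbrsIn G A q) = ∑ v ∈ A, #(nbrsIn G A v) ^ 2 := by
  have hswap := sum_card_bipartiteAbove_eq_sum_card_bipartiteBelow (s := A ×ˢ A) (t := A)
    (fun pq v => G.Adj pq.1 v ∧ G.Adj pq.2 v)
  simp only [bipartiteAbove, bipartiteBelow, sum_product, filter_and] at hswap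
  rw [hswap]
  refine sum_congr rfl fun v _ => ?_
  rw [← filter_and, filter_product (G.Adj · v) (G.Adj · v), card_product, sq]
  simp only [nbrsIn, G.adj_comm]

theorem exists_one_lt_card_inter_nbrsIn
    (h : #A * #(G.interedges A A) + #A ^ 2 * (#A - 1) < #(G.interedges A A) ^ 2) :
    ∃ p ∈ A, ∃ q ∈ A, p ≠ q ∧ 1 < #(nbrsIn G A p ∩ nbrsIn G A q) := by
  by_contra! hle
  have hsq : ∑ v ∈ A, #(nbrsIn G A v) ^ 2 ≤ ∑ p ∈ A, (#(nbrsIn G A p) + (#A - 1)) := by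
    rw [← sum_card_inter_nbrsIn]
    refine sum_le_sum fun p hp => ?_
    have hothers := sum_le_card_nsmul (A.erase p) (fun q => #(nbrsIn G A p ∩ nbrsIn G A q)) 1
      fun q hq => hle p hp q (mem_of_mem_erase hq) (ne_of_mem_erase hq).symm
    rw [card_erase_of_mem hp, smul_eq_mul, mul_one] at hothers
    rw [← add_sum_erase A _ hp, inter_self]
    exact Nat.add_le_add_left hothers _
  refine h.not_ge ?_
  calc #(G.interedges A A) ^ 2
      ≤ #A * ∑ v ∈ A, #(nbrsIn G A v) ^ 2 := by
        rw [card_interedges_eq_sum]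
        exact sq_sum_le_card_mul_sum_sq
    _ ≤ #A * ∑ p ∈ A, (#(nbrsIn G A p) + (#A - 1)) := Nat.mul_le_mul_left _ hsq
    _ = #A * #(G.interedges A A) + #A ^ 2 * (#A - 1) := by
        rw [sum_add_distrib, ← card_interedges_eq_sum, sum_const, smul_eq_mul]
        ring

end CommonNeighbours

/-! ### Deleting and exchanging an edge -/

section DeleteEdge

variable {f : Sym2 V}

lemma isNClique_deleteEdges_singleton [DecidableEq V] (hA : G.IsNClique k A)
    (hf : f ∉ A.offDiag.image Sym2.mk.uncurry) :
    (G.deleteEdges {f}).IsNClique k A := by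
  refine ⟨fun u hu v hv huv => SimpleGraph.deleteEdges_adj.2 ⟨hA.isClique hu hv huv, ?_⟩,
    hA.card_eq⟩
  exact fun h => hf (mem_image.2 ⟨(u, v), mem_offDiag.2 ⟨hu, hv, huv⟩, h⟩)

lemma exists_subset_forall_not_cliqueFreeOn
    (h : ∀ f : Sym2 V, ¬ (G.deleteEdges {f}).CliqueFreeOn W k) :
    ∃ Z ⊆ W, #Z ≤ k + k.choose 2 * k ∧ ∀ f : Sym2 V, ¬ (G.deleteEdges {f}).CliqueFreeOn Z k := by
  classical
  simp only [SimpleGraph.CliqueFreeOn, not_forall, not_not] at h ⊢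
  choose K hKW hK using h
  obtain hV | ⟨⟨f₀⟩⟩ := isEmpty_or_nonempty (Sym2 V)
  · exact ⟨∅, empty_subset W, by simp, hV.elim⟩
  have hcard : #((K f₀).offDiag.image Sym2.mk.uncurry) = k.choose 2 := by
    rw [Sym2.card_image_offDiag, (hK f₀).card_eq]
  -- a clique together with, for each of its edges, one that survives the loss of that edge
  refine ⟨K f₀ ∪ ((K f₀).offDiag.image Sym2.mk.uncurry).biUnion K, ?_, ?_, fun f => ?_⟩
  · exact union_subset (hKW f₀) (biUnion_subset.2 fun f _ => hKW f)
  · refine (card_union_le _ _).trans (add_le_add (hK f₀).card_eq.le ?_)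
    rw [← hcard]
    exact card_biUnion_le_card_mul _ _ _ fun f _ => (hK f).card_eq.le
  · by_cases hf : f ∈ (K f₀).offDiag.image Sym2.mk.uncurry
    · exact ⟨K f, coe_subset.2 ((subset_biUnion_of_mem K hf).trans subset_union_right), hK f⟩
    · exact ⟨K f₀, coe_subset.2 subset_union_left,
        isNClique_deleteEdges_singleton ((hK f₀).mono (G.deleteEdges_le _)) hf⟩

lemma card_interedges_le_deleteEdges_singleton_add [DecidableRel G.Adj] (x y : V)
    [DecidableRel (G.deleteEdges {s(x, y)}).Adj] :
    #(G.interedges A B) ≤ #((G.deleteEdges {s(x, y)}).interedges A B) + 2 := by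
  classical
  have hsub : G.interedges A B \ (G.deleteEdges {s(x, y)}).interedges A B ⊆ {(x, y), (y, x)} := by
    rintro ⟨a, b⟩ hab
    rw [mem_sdiff, SimpleGraph.mk_mem_interedges_iff, SimpleGraph.mk_mem_interedges_iff,
      SimpleGraph.deleteEdges_adj] at hab
    have : s(a, b) = s(x, y) := by
      by_contra hne
      exact hab.2 ⟨hab.1.1, hab.1.2.1, hab.1.2.2, hne⟩
    simpa using this
  have := le_card_sdiff ((G.deleteEdges {s(x, y)}).interedges A B) (G.interedges A B)
  have := (card_le_card hsub).trans card_le_two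
  omega

theorem not_cliqueFreeOn_deleteEdges_singleton [DecidableRel G.Adj]
    (h : #W ^ 2 + 4 < 2 * #(G.interedges W W)) :
    ¬ (G.deleteEdges {f}).CliqueFreeOn W 3 := by
  classical
  induction f with | _ x y =>
  intro hfree
  have hmantel := two_mul_card_interedges_le (G := G.deleteEdges {s(x, y)}) (empty_subset W)
    (by simpa using hfree)
  have := card_interedges_le_deleteEdges_singleton_add (G := G) (A := W) (B := W) x y
  rw [sum_empty] at hmantel
  omega

end DeleteEdge

section SwapEdge

variable {κ : Type*} {c : Sym2 V → κ} {e : Sym2 V}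

/-- The graph in which `e` replaces the edges of `G` having the same colour as `e`. A rainbow
graph stays rainbow. -/
def swapEdge (G : SimpleGraph V) (c : Sym2 V → κ) (e : Sym2 V) : SimpleGraph V :=
  G.deleteEdges (c ⁻¹' {c e}) ⊔ SimpleGraph.fromEdgeSet {e}

lemma swapEdge_adj_self {p q : V} (hpq : p ≠ q) : (swapEdge G c s(p, q)).Adj p q :=
  Or.inr ((SimpleGraph.fromEdgeSet_adj _).2 ⟨rfl, hpq⟩)

lemma injOn_edgeSet_swapEdge (hc : Set.InjOn c G.edgeSet) :
    Set.InjOn c (swapEdge G c e).edgeSet := by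
  have hsub : (swapEdge G c e).edgeSet ⊆ insert e (G.edgeSet \ c ⁻¹' {c e}) := by
    rw [swapEdge, SimpleGraph.edgeSet_sup, SimpleGraph.edgeSet_deleteEdges,
      SimpleGraph.edgeSet_fromEdgeSet, Set.insert_eq, Set.union_comm]
    exact Set.union_subset_union_left _ Set.sdiff_subset
  refine Set.InjOn.mono hsub ((Set.injOn_insert fun h => h.2 rfl).2 ⟨hc.mono Set.sdiff_subset, ?_⟩)
  rintro ⟨f, hf, hfe⟩
  exact hf.2 hfe

lemma exists_deleteEdges_le_swapEdge (hc : Set.InjOn c G.edgeSet) :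
    ∃ f : Sym2 V, G.deleteEdges {f} ≤ swapEdge G c e := by
  suffices ∃ f, ∀ g ∈ G.edgeSet, c g = c e → g = f by
    obtain ⟨f, hf⟩ := this
    refine ⟨f, fun u v huv => Or.inl ?_⟩
    rw [SimpleGraph.deleteEdges_adj] at huv ⊢
    exact ⟨huv.1, fun h => huv.2 (hf _ huv.1 h)⟩
  by_cases h : ∃ f ∈ G.edgeSet, c f = c e
  · obtain ⟨f, hf, hfe⟩ := h
    exact ⟨f, fun g hg hge => hc hg hf (hge.trans hfe.symm)⟩
  · exact ⟨e, fun g hg hge => (h ⟨g, hg, hge⟩).elim⟩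

lemma le_swapEdge (hc : Set.InjOn c G.edgeSet) (he : e ∈ G.edgeSet) : G ≤ swapEdge G c e := by
  intro u v huv
  obtain rfl | hne := eq_or_ne s(u, v) e
  · exact swapEdge_adj_self huv.ne
  · exact Or.inl (SimpleGraph.deleteEdges_adj.2 ⟨huv, fun h => hne (hc huv he h)⟩)

lemma HasTrianglePacking.exists_swapEdge (hc : Set.InjOn c G.edgeSet)
    (h : HasTrianglePacking G W (k + 1)) : ∃ e, HasTrianglePacking (swapEdge G c e) W (k + 1) := by
  classical
  obtain ⟨P, hP, hk⟩ := h
  obtain ⟨D, hD⟩ := card_pos.1 (by omega : 0 < #P)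
  obtain ⟨a, b, -, hab, -⟩ := SimpleGraph.is3Clique_iff.1 (hP.isNClique D hD)
  exact ⟨s(a, b), HasTrianglePacking.mono_graph (le_swapEdge hc hab) ⟨P, hP, hk⟩⟩

end SwapEdge

/-! ### One new edge yields the triangles -/

/-- The number of edges of the join of `K_t` with a balanced complete bipartite graph on the other
`n - t` vertices, plus two. The subtraction is only meaningful for `t ≤ n`. -/
def rainbowThreshold (t n : ℕ) : ℕ := t.choose 2 + t * (n - t) + (n - t) ^ 2 / 4 + 2

lemma rainbowThreshold_succ {t n : ℕ} (h : t + 1 ≤ n) :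
    rainbowThreshold (t + 1) n = rainbowThreshold t (n - 1) + (n - 1) := by
  obtain ⟨d, rfl⟩ := Nat.exists_eq_add_of_le h
  rw [rainbowThreshold, rainbowThreshold, show t + 1 + d - (t + 1) = d by omega,
    show t + 1 + d - 1 - t = d by omega, show t + 1 + d - 1 = t + d by omega,
    Nat.choose_succ_succ' t 1, Nat.choose_one_right]
  ring

/-- Both sides of `n² + 2tn - t² - 2t + 5 ≤ 4 · rainbowThreshold t n` are shifted so that no
subtraction occurs. -/
lemma sq_add_le_four_mul_rainbowThreshold {t n : ℕ} (h : t ≤ n) :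
    n ^ 2 + 2 * (t * n) + 5 ≤ 4 * rainbowThreshold t n + t ^ 2 + 2 * t := by
  obtain ⟨d, rfl⟩ := Nat.exists_eq_add_of_le h
  have hchoose : 2 * t.choose 2 + t = t ^ 2 := by
    rw [mul_comm, Nat.choose_two_right, Nat.div_mul_cancel (Nat.even_mul_pred_self t).two_dvd]
    cases t with
    | zero => rfl
    | succ t => simp only [Nat.add_sub_cancel]; ring
  have hdiv : d ^ 2 ≤ 4 * (d ^ 2 / 4) + 3 := by omega
  rw [rainbowThreshold, Nat.add_sub_cancel_left]
  nlinarith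

lemma sq_add_lt_four_mul_rainbowThreshold_succ {t n k : ℕ} (hk : k ≤ t + 2)
    (hn : 15 * (t + 1) + 57 ≤ n) :
    n ^ 2 + 2 * (k * (2 * (3 * t + 9) + 7 * k)) < 4 * rainbowThreshold (t + 1) n := by
  have hlower := sq_add_le_four_mul_rainbowThreshold (show t + 1 ≤ n by omega)
  have hk' : k * (2 * (3 * t + 9) + 7 * k) ≤ (t + 2) * (2 * (3 * t + 9) + 7 * (t + 2)) := by gcongr
  nlinarith [Nat.mul_le_mul_left (t + 1) hn]

lemma mul_add_sq_mul_lt_sq {N D k : ℕ} (hN : 45 ≤ N) (hk : k ≤ 12)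
    (hD : (N + k) ^ 2 + 5 ≤ 2 * D + 4 * (k * N) + 2 * (k * k)) :
    N * D + N ^ 2 * (N - 1) < D ^ 2 := by
  have hND : N ^ 2 ≤ 2 * D + 28 * N := by nlinarith
  obtain ⟨s, rfl⟩ := Nat.exists_eq_add_of_le hN
  obtain ⟨d, rfl⟩ : ∃ d, D = 45 + s + d := Nat.exists_eq_add_of_le (by nlinarith)
  have hfst : (45 + s) * (17 + s) ≤ 2 * (45 + s + d) := by linarith
  have hsnd : (45 + s) * (15 + s) ≤ 2 * d := by linarith
  have hmul := Nat.mul_le_mul hfst hsnd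
  have hpos : 0 < (45 + s) ^ 2 := by positivity
  have hgap : 4 * (44 + s) < (17 + s) * (15 + s) := by nlinarith
  rw [show 45 + s - 1 = 44 + s by omega]
  nlinarith [Nat.mul_lt_mul_of_pos_left hgap hpos]

section Main

variable [DecidableRel G.Adj] {κ : Type*} {c : Sym2 V → κ}

lemma exists_mem_deleteEdges_adj [DecidableEq V] {p q : V}
    (h : 1 < #(nbrsIn G A p ∩ nbrsIn G A q)) (f : Sym2 V) :
    ∃ w ∈ A, (G.deleteEdges {f}).Adj p w ∧ (G.deleteEdges {f}).Adj q w := by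
  obtain ⟨w, hw, w', hw', hne⟩ := one_lt_card.1 h
  simp only [mem_inter, mem_filter] at hw hw'
  by_contra! hdel
  have hblocked : ∀ v ∈ A, G.Adj p v → G.Adj q v → f = s(p, v) ∨ f = s(q, v) := by
    intro v hv hpv hqv
    by_contra! hf
    exact hdel v hv (SimpleGraph.deleteEdges_adj.2 ⟨hpv, hf.1.symm⟩)
      (SimpleGraph.deleteEdges_adj.2 ⟨hqv, hf.2.symm⟩)
  have hpw' := hw'.1.2.ne
  have hqw' := hw'.2.2.ne
  obtain h₁ | h₁ := hblocked w hw.1.1 hw.1.2 hw.2.2 <;>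
    obtain h₂ | h₂ := hblocked w' hw'.1.1 hw'.1.2 hw'.2.2 <;>
    grind [Sym2.eq_iff]

theorem exists_hasTrianglePacking_swapEdge_two (hc : Set.InjOn c G.edgeSet) (hW : 57 ≤ #W)
    (hD : #W ^ 2 + 5 ≤ 2 * #(G.interedges W W)) :
    ∃ e, HasTrianglePacking (swapEdge G c e) W 2 := by
  classical
  obtain ⟨Z, hZW, hZ, hrobust⟩ := exists_subset_forall_not_cliqueFreeOn (G := G) (W := W) (k := 3)
    fun f => not_cliqueFreeOn_deleteEdges_singleton (by omega)
  have hcard : #(W \ Z) + #Z = #W := card_sdiff_add_card_eq_card hZW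
  have hZ12 : #Z ≤ 12 := hZ
  have hdense := mul_add_sq_mul_lt_sq (N := #(W \ Z)) (D := #(G.interedges (W \ Z) (W \ Z)))
    (by omega) hZ12 (by
      rw [hcard]
      have := card_interedges_self_eq_sdiff (G := G) hZW
      have := G.card_interedges_le_mul Z (W \ Z)
      have := G.card_interedges_le_mul Z Z
      linarith)
  obtain ⟨p, hp, q, hq, hpq, hpair⟩ := exists_one_lt_card_inter_nbrsIn hdense
  obtain ⟨f, hf⟩ := exists_deleteEdges_le_swapEdge (e := s(p, q)) hc
  obtain ⟨w, hw, hpw, hqw⟩ := exists_mem_deleteEdges_adj hpair f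
  have htriangle : (swapEdge G c s(p, q)).IsNClique 3 {p, q, w} :=
    SimpleGraph.is3Clique_triple_iff.2 ⟨swapEdge_adj_self hpq, hf hpw, hf hqw⟩
  have hin : HasTrianglePacking (swapEdge G c s(p, q)) (W \ Z) 1 :=
    (HasTrianglePacking.of_isNClique htriangle).mono (by grind)
  obtain ⟨K, hKZ, hK⟩ : ∃ K ⊆ Z, (G.deleteEdges {f}).IsNClique 3 K := by
    simpa [SimpleGraph.CliqueFreeOn] using hrobust f
  have hout : HasTrianglePacking (swapEdge G c s(p, q)) Z 1 :=
    (HasTrianglePacking.of_isNClique (hK.mono hf)).mono hKZ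
  refine ⟨s(p, q), ?_⟩
  simpa [sdiff_union_of_subset hZW] using hin.add hout sdiff_disjoint

lemma HasTrianglePacking.swapEdge_succ [DecidableEq V] (hc : Set.InjOn c G.edgeSet)
    {e : Sym2 V} {x : V}
    (hx : x ∈ W) (hSW : S ⊆ W) (hcover : 3 * k + 2 < coverNum G (nbrsIn G S x))
    (h : HasTrianglePacking (swapEdge G c e) (W.erase x) k) :
    HasTrianglePacking (swapEdge G c e) W (k + 1) := by
  obtain ⟨P, hP, rfl⟩ := h
  obtain ⟨f, hf⟩ := exists_deleteEdges_le_swapEdge (e := e) hc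
  have hF : #(P.biUnion id ∪ f.toFinset) ≤ 3 * #P + 2 :=
    (card_union_le _ _).trans <| add_le_add hP.card_biUnion.le <|
      (Multiset.toFinset_card_le _).trans_eq f.card_toMultiset
  obtain ⟨E, hES, -, hxE⟩ := exists_insert_isNClique (hF.trans_lt hcover)
  have hfE : f ∉ (insert x E).offDiag.image Sym2.mk.uncurry := by
    rw [mem_image]
    rintro ⟨⟨u, v⟩, huv, rfl⟩
    grind [Sym2.mem_toFinset]
  have hnew := HasTrianglePacking.of_isNClique ((isNClique_deleteEdges_singleton hxE hfE).mono hf)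
  have hold : HasTrianglePacking (swapEdge G c e) (P.biUnion id) #P := ⟨P, hP.mono subset_rfl, rfl⟩
  have := hP.biUnion_subset
  exact (hold.add hnew (by grind [disjoint_left])).mono (by grind)

theorem exists_hasTrianglePacking_swapEdge (hc : Set.InjOn c G.edgeSet) (t : ℕ)
    (hn : 15 * t + 57 ≤ #W) (hD : 2 * rainbowThreshold t #W ≤ #(G.interedges W W)) :
    ∃ e, HasTrianglePacking (swapEdge G c e) W (t + 2) := by
  classical
  induction t generalizing W with
  | zero =>
    have := sq_add_le_four_mul_rainbowThreshold (#W).zero_le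
    exact exists_hasTrianglePacking_swapEdge_two hc hn (by omega)
  | succ t ih =>
    by_cases hmany : HasTrianglePacking G W (t + 3)
    · exact hmany.exists_swapEdge hc
    obtain ⟨P, hP, hlt, hmax⟩ := exists_maximal_isTrianglePacking hmany
    by_cases hlarge : ∀ v ∈ P.biUnion id,
        coverNum G (nbrsIn G (W \ P.biUnion id) v) ≤ 3 * t + 9
    · have hcount := hP.two_mul_card_interedges_le hmax hlarge (by omega)
      have := sq_add_lt_four_mul_rainbowThreshold_succ (Nat.le_of_lt_succ hlt) hn
      omega
    · push Not at hlarge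
      obtain ⟨x, hxP, hx⟩ := hlarge
      have hxW := hP.biUnion_subset hxP
      have hcard := card_erase_of_mem hxW
      have herase := card_interedges_self_le_erase_add (G := G) x hxW
      rw [rainbowThreshold_succ (by omega), ← hcard] at hD
      obtain ⟨e, he⟩ := ih (W := W.erase x) (by omega) (by omega)
      exact ⟨e, he.swapEdge_succ hc hxW sdiff_subset (lt_trans (by omega) hx)⟩

end Main

/-! ### Rainbow triangles in edge-colourings -/

lemma exists_le_injOn_edgeSet {κ : Type*} (H : SimpleGraph V) (c : Sym2 V → κ) :
    ∃ G ≤ H, Set.InjOn c G.edgeSet ∧ c '' G.edgeSet = c '' H.edgeSet := by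
  obtain ⟨E, hEH, hE⟩ := H.edgeSet.exists_subset_bijOn c
  have hedge : (SimpleGraph.fromEdgeSet E).edgeSet = E := by
    rw [SimpleGraph.edgeSet_fromEdgeSet, sdiff_eq_left, Set.disjoint_left]
    exact fun e he => H.not_isDiag_of_mem_edgeSet (hEH he)
  refine ⟨.fromEdgeSet E, ?_, ?_, ?_⟩
  · rwa [← SimpleGraph.edgeSet_subset_edgeSet, hedge]
  · rw [hedge]
    exact hE.injOn
  · rw [hedge]
    exact hE.image_eq

lemma card_interedges_univ [Fintype V] [DecidableRel G.Adj] :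
    #(G.interedges univ univ) = 2 * #G.edgeFinset := by
  rw [← G.sum_degrees_eq_twice_card_edges, card_interedges_eq_sum]
  refine sum_congr rfl fun v _ => ?_
  rw [← G.card_neighborFinset_eq_degree, G.neighborFinset_eq_filter]

lemma HasTrianglePacking.exists_embedding (h : HasTrianglePacking G W k) :
    ∃ f : Fin k → Fin 3 → V, Function.Injective (fun p : Fin k × Fin 3 => f p.1 p.2) ∧
      ∀ i j j', j ≠ j' → G.Adj (f i j) (f i j') := by
  obtain ⟨P, hP, hk⟩ := h
  let triangle := (equivFinOfCardEq hk).symm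
  have hlabel : ∀ i, ∃ g : Fin 3 → V, Function.Injective g ∧ ∀ j, g j ∈ (triangle i).1 := fun i =>
    let label := (equivFinOfCardEq (hP.isNClique _ (triangle i).2).card_eq).symm
    ⟨fun j => label j, Subtype.val_injective.comp label.injective, fun j => (label j).2⟩
  choose vertex hinj hmem using hlabel
  refine ⟨vertex, ?_, fun i j j' hj => ?_⟩
  · rintro ⟨i, j⟩ ⟨i', j'⟩ (hij : vertex i j = vertex i' j')
    have htriangle : (triangle i).1 = triangle i' := by
      by_contra hne
      exact disjoint_left.1 (hP.pairwiseDisjoint (triangle i).2 (triangle i').2 hne)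
        (hmem i j) (hij ▸ hmem i' j')
    obtain rfl := triangle.injective (Subtype.ext htriangle)
    rw [hinj i hij]
  · exact (hP.isNClique _ (triangle i).2).isClique (hmem i j) (hmem i j') ((hinj i).ne hj)

lemma HasTrianglePacking.rainbowIndepTrianglesIn {c : Sym2 V → ℕ} (hc : Set.InjOn c G.edgeSet)
    (h : HasTrianglePacking G W k) : RainbowIndepTrianglesIn G k c := by
  obtain ⟨f, hf, hadj⟩ := h.exists_embedding
  refine ⟨f, hf, fun i => ⟨hadj i _ _ (by decide), hadj i _ _ (by decide), hadj i _ _ (by decide)⟩,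
    ?_⟩
  have hnext : ∀ j : Fin 3, j ≠ j + 1 := by decide
  rintro ⟨i, j⟩ ⟨i', j'⟩ hcol
  obtain ⟨hfst, -⟩ | ⟨hfst, hsnd⟩ :=
    Sym2.eq_iff.1 (hc (hadj i _ _ (hnext j)) (hadj i' _ _ (hnext j')) hcol)
  · exact hf hfst
  · have hj : j = j' + 1 := congrArg Prod.snd (@hf (i, j) (i', j' + 1) hfst)
    have hj' : j + 1 = j' := congrArg Prod.snd (@hf (i, j + 1) (i', j') hsnd)
    have : ∀ a b : Fin 3, a = b + 1 → a + 1 ≠ b := by decide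
    exact absurd hj' (this j j' hj)

end AntiRamsey

lemma RainbowIndepTrianglesIn.mono {V : Type*} {G H : SimpleGraph V} {k : ℕ}
    {c : Sym2 V → ℕ} (hGH : G ≤ H) :
    RainbowIndepTrianglesIn G k c → RainbowIndepTrianglesIn H k c := by
  rintro ⟨f, hf, hadj, hc⟩
  exact ⟨f, hf, fun i => (hadj i).imp (@hGH _ _) (And.imp (@hGH _ _) (@hGH _ _)), hc⟩

lemma UsesExactly.ncard_image {n r : ℕ} {c : Sym2 (Fin n) → ℕ} (h : UsesExactly n r c) :
    (c '' (⊤ : SimpleGraph (Fin n)).edgeSet).ncard = r := by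
  have himage : c '' (⊤ : SimpleGraph (Fin n)).edgeSet = Set.Iio r := by
    ext j
    exact ⟨by rintro ⟨e, he, rfl⟩; exact h.1 e he, h.2 j⟩
  rw [himage, Set.ncard_Iio_nat]

open Finset AntiRamsey in
theorem antiRamsey_indep_triangles_upper_general {V : Type*} [Fintype V] (t : ℕ)
    (c : Sym2 V → ℕ) (hn : 15 * t + 57 ≤ Fintype.card V)
    (hc : rainbowThreshold t (Fintype.card V) ≤ (c '' (⊤ : SimpleGraph V).edgeSet).ncard) :
    RainbowIndepTrianglesIn (⊤ : SimpleGraph V) (t + 2) c := by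
  classical
  obtain ⟨G, -, hG, himage⟩ := exists_le_injOn_edgeSet ⊤ c
  have hdense : 2 * rainbowThreshold t (Fintype.card V) ≤ #(G.interedges univ univ) := by
    rw [card_interedges_univ, ← Set.ncard_coe_finset, G.coe_edgeFinset, ← hG.ncard_image, himage]
    exact Nat.mul_le_mul_left 2 hc
  obtain ⟨e, he⟩ := exists_hasTrianglePacking_swapEdge hG t hn hdense
  exact (he.rainbowIndepTrianglesIn (injOn_edgeSet_swapEdge hG)).mono le_top

/-- For `t ≥ 0`, `n ≥ 15t + 57` and `r = C(t,2) + t(n-t) + ⌊(n-t)²/4⌋ + 2`, every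
edge-coloring of `K_n` using exactly `r` colors contains `t+2` pairwise vertex-disjoint
triangles whose `3(t+2)` edges receive pairwise distinct colors. -/
theorem antiRamsey_indep_triangles_upper (t n r : ℕ) (hn : 15 * t + 57 ≤ n)
    (hr : r = t.choose 2 + t * (n - t) + (n - t) ^ 2 / 4 + 2) :
    ∀ c : Sym2 (Fin n) → ℕ, UsesExactly n r c →
      RainbowIndepTrianglesIn (⊤ : SimpleGraph (Fin n)) (t + 2) c := fun c hc =>
  antiRamsey_indep_triangles_upper_general t c (by rwa [Fintype.card_fin]) <| by
    rw [Fintype.card_fin, hc.ncard_image, hr, AntiRamsey.rainbowThreshold]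
end

section
/- Let t ≥ 0 and n ≥ 15t + 57 be integers. Let G be a simple graph on n vertices with e(G) ≥ C(t,2) + t(n−t) + ⌊(n−t)²/4⌋ + 2 that contains no t+2 pairwise vertex-disjoint triangles. Let M be any family of t+1 pairwise vertex-disjoint triangles in G, let D be the induced subgraph of G on the vertices not covered by M, let 𝓜 be a maximum matching of D, and let A be the set of triangles of M that contain a vertex friendly in G with at least two distinct edges of 𝓜. Then |A| ≥ t. -/
/-- `G` contains `k` pairwise vertex-disjoint triangles. -/
def HasIndepTriangles {V : Type*} (G : SimpleGraph V) (k : ℕ) : Prop :=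
  ∃ f : Fin k → Fin 3 → V,
    Function.Injective (fun p : Fin k × Fin 3 => f p.1 p.2) ∧
    ∀ i, G.Adj (f i 0) (f i 1) ∧ G.Adj (f i 1) (f i 2) ∧ G.Adj (f i 0) (f i 2)

/-- The vertex `w` is friendly with the edge `e`: it is adjacent to both endpoints. -/
def Friendly {V : Type*} (G : SimpleGraph V) (w : V) (e : Sym2 V) : Prop :=
  ∀ x ∈ e, G.Adj w x

/-- `F` is a matching of the subgraph of `G` induced on `S`. -/
def IsMatchingOn {V : Type*} (G : SimpleGraph V) (S : Set V) (F : Finset (Sym2 V)) : Prop :=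
  (∀ e ∈ F, e ∈ G.edgeSet ∧ ∀ x ∈ e, x ∈ S) ∧
  ((F : Set (Sym2 V)).Pairwise fun e f => ∀ v, v ∈ e → v ∉ f)

/-!
Since `G` has no `t + 2` disjoint triangles, the family `M` is a maximum triangle packing: no `k` of
its triangles can be exchanged for `k + 1` disjoint triangles using only their vertices and those of
`D`. Hence `D` is triangle-free. If a vertex `a` of a triangle `T ∈ A` is friendly with an edge `e`
of the matching, then the other two vertices of `T` have no common neighbour in `D` outside `e` and
are friendly with no other edge of the matching; so, having two choices for `e`, `T` sends at most
`2|D|` edges to `D`. Exchanging two triangles of `A` for three shows that at most `7` edges join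
them. A triangle outside `A` sends at most `3(|D| - m) + 3` edges to `D`, where `m` is the size of
the matching, and `D` itself has at most `m(|D| - m)` edges. If two or more triangles are outside
`A`, these bounds add up to less than the assumed number of edges.
-/

open Finset

variable {V : Type*} {G : SimpleGraph V}

section EdgeCounts

variable [DecidableRel G.Adj] {X Y Z : Finset V}

lemma card_interedges_comm (X Y : Finset V) : #(G.interedges X Y) = #(G.interedges Y X) :=
  have := G.symm
  Rel.card_interedges_comm X Y

lemma card_interedges_eq_sum_left (X Y : Finset V) :
    #(G.interedges X Y) = ∑ x ∈ X, #{y ∈ Y | G.Adj x y} := by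
  simp only [SimpleGraph.interedges_def, card_filter, sum_product]

lemma card_interedges_eq_sum_right (X Y : Finset V) :
    #(G.interedges X Y) = ∑ y ∈ Y, #{x ∈ X | G.Adj x y} := by
  simp only [SimpleGraph.interedges_def, card_filter, sum_product_right]

lemma card_interedges_union_left [DecidableEq V] (h : Disjoint X Y) (Z : Finset V) :
    #(G.interedges (X ∪ Y) Z) = #(G.interedges X Z) + #(G.interedges Y Z) := by
  simp only [card_interedges_eq_sum_left, sum_union h]

lemma card_interedges_union_right [DecidableEq V] (X : Finset V) (h : Disjoint Y Z) :
    #(G.interedges X (Y ∪ Z)) = #(G.interedges X Y) + #(G.interedges X Z) := by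
  simp only [card_interedges_eq_sum_right, sum_union h]

lemma card_interedges_biUnion_left [DecidableEq V] {ι : Type*} {s : Finset ι} {f : ι → Finset V}
    (h : (s : Set ι).PairwiseDisjoint f) (Y : Finset V) :
    #(G.interedges (s.biUnion f) Y) = ∑ i ∈ s, #(G.interedges (f i) Y) := by
  simp only [card_interedges_eq_sum_left, sum_biUnion h]

lemma card_interedges_biUnion_right [DecidableEq V] {ι : Type*} {s : Finset ι} {f : ι → Finset V}
    (X : Finset V) (h : (s : Set ι).PairwiseDisjoint f) :
    #(G.interedges X (s.biUnion f)) = ∑ i ∈ s, #(G.interedges X (f i)) := by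
  simp only [card_interedges_eq_sum_right, sum_biUnion h]

lemma card_interedges_le_of_forall_exists_not_adj (h : ∀ y ∈ Y, ∃ x ∈ X, ¬ G.Adj x y) :
    #(G.interedges X Y) ≤ (#X - 1) * #Y := by
  rw [card_interedges_eq_sum_right, mul_comm, ← smul_eq_mul]
  exact sum_le_card_nsmul _ _ _ fun y hy ↦
    Nat.le_sub_one_of_lt (card_lt_card (filter_ssubset.2 (h y hy)))

lemma card_interedges_le_of_subset (h : X ⊆ Y) : #(G.interedges X Y) ≤ (#Y - 1) * #X := by
  rw [card_interedges_comm]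
  exact card_interedges_le_of_forall_exists_not_adj fun x hx ↦ ⟨x, h hx, G.irrefl⟩

lemma card_interedges_univ_univ [Fintype V] :
    #(G.interedges univ univ) = 2 * G.edgeSet.ncard := by
  classical
  simp only [card_interedges_eq_sum_left, ← SimpleGraph.neighborFinset_eq_filter,
    SimpleGraph.card_neighborFinset_eq_degree, G.sum_degrees_eq_twice_card_edges,
    ← SimpleGraph.coe_edgeFinset, Set.ncard_coe_finset]

lemma two_mul_ncard_edgeSet_eq [Fintype V] [DecidableEq V] (X : Finset V) :
    2 * G.edgeSet.ncard =
      #(G.interedges X X) + 2 * #(G.interedges X Xᶜ) + #(G.interedges Xᶜ Xᶜ) := by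
  have hX : Disjoint X Xᶜ := disjoint_compl_right
  rw [← card_interedges_univ_univ, ← union_compl X, card_interedges_union_left hX,
    card_interedges_union_right _ hX, card_interedges_union_right _ hX,
    card_interedges_comm Xᶜ X]
  ring

end EdgeCounts

section Matchings

variable [DecidableEq V] {S : Finset V} {F : Finset (Sym2 V)} {e : Sym2 V} {w x y : V}

lemma friendly_iff_toFinset : Friendly G w e ↔ ∀ x ∈ e.toFinset, G.Adj w x := by
  simp only [Friendly, Sym2.mem_toFinset]

instance [DecidableRel G.Adj] : Decidable (Friendly G w e) :=
  decidable_of_iff' _ friendly_iff_toFinset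

lemma Friendly.isNClique_insert (h : Friendly G w e) (he : G.IsNClique 2 e.toFinset) :
    G.IsNClique 3 (insert w e.toFinset) :=
  he.insert (friendly_iff_toFinset.1 h)

namespace IsMatchingOn

lemma isNClique_toFinset {S : Set V} (hF : IsMatchingOn G S F) (he : e ∈ F) :
    G.IsNClique 2 e.toFinset := by
  have hadj := (hF.1 e he).1
  induction e with
  | h x y =>
    rw [SimpleGraph.mem_edgeSet] at hadj
    simp [SimpleGraph.isNClique_iff, Sym2.toFinset_mk_eq, hadj, hadj.ne]

lemma pairwiseDisjoint_toFinset {S : Set V} (hF : IsMatchingOn G S F) :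
    (F : Set (Sym2 V)).PairwiseDisjoint Sym2.toFinset := fun _ he _ he' hne ↦
  disjoint_left.2 fun v hv hv' ↦
    hF.2 he he' hne v (Sym2.mem_toFinset.1 hv) (Sym2.mem_toFinset.1 hv')

lemma toFinset_subset (hF : IsMatchingOn G S F) (he : e ∈ F) : e.toFinset ⊆ S :=
  fun x hx ↦ (hF.1 e he).2 x (Sym2.mem_toFinset.1 hx)

lemma biUnion_toFinset_subset (hF : IsMatchingOn G S F) : F.biUnion Sym2.toFinset ⊆ S :=
  biUnion_subset.2 fun _ ↦ hF.toFinset_subset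

lemma card_biUnion_toFinset {S : Set V} (hF : IsMatchingOn G S F) :
    #(F.biUnion Sym2.toFinset) = 2 * #F := by
  rw [card_biUnion hF.pairwiseDisjoint_toFinset,
    sum_const_nat fun e he ↦ (hF.isNClique_toFinset he).card_eq, mul_comm]

lemma card_eq_two_mul_add (hF : IsMatchingOn G S F) :
    #S = 2 * #F + #(S \ F.biUnion Sym2.toFinset) := by
  rw [← hF.card_biUnion_toFinset, add_comm, card_sdiff_add_card_eq_card hF.biUnion_toFinset_subset]

variable [DecidableRel G.Adj]

lemma card_interedges_eq_add (hF : IsMatchingOn G S F) (X : Finset V) :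
    #(G.interedges X S) = #(G.interedges X (F.biUnion Sym2.toFinset)) +
      #(G.interedges X (S \ F.biUnion Sym2.toFinset)) := by
  rw [← card_interedges_union_right _ disjoint_sdiff,
    union_sdiff_of_subset hF.biUnion_toFinset_subset]

lemma card_adj_biUnion_le {S : Set V} (hF : IsMatchingOn G S F) (w : V) :
    #{x ∈ F.biUnion Sym2.toFinset | G.Adj w x} ≤ #F + #{e ∈ F | Friendly G w e} := by
  have hedge : ∀ e ∈ F, #{x ∈ e.toFinset | G.Adj w x} ≤ 1 + if Friendly G w e then 1 else 0 := by
    intro e he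
    have htwo := (hF.isNClique_toFinset he).card_eq
    split_ifs with hw
    · exact (card_filter_le _ _).trans htwo.le
    · rw [friendly_iff_toFinset] at hw
      push Not at hw
      exact Nat.le_of_lt_succ ((card_lt_card (filter_ssubset.2 hw)).trans_eq htwo)
  calc #{x ∈ F.biUnion Sym2.toFinset | G.Adj w x}
      ≤ ∑ e ∈ F, #{x ∈ e.toFinset | G.Adj w x} := by
        rw [filter_biUnion]; exact card_biUnion_le
    _ ≤ ∑ e ∈ F, (1 + if Friendly G w e then 1 else 0) := sum_le_sum hedge
    _ = #F + #{e ∈ F | Friendly G w e} := by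
        rw [sum_add_distrib, card_eq_sum_ones, card_filter]

lemma card_interedges_biUnion_le {S : Set V} {X : Finset V} {k : ℕ} (hF : IsMatchingOn G S F)
    (h : ∀ w ∈ X, #{e ∈ F | Friendly G w e} ≤ k) :
    #(G.interedges X (F.biUnion Sym2.toFinset)) ≤ #X * (#F + k) := by
  rw [card_interedges_eq_sum_left, ← smul_eq_mul]
  exact sum_le_card_nsmul _ _ _ fun w hw ↦
    (hF.card_adj_biUnion_le w).trans (Nat.add_le_add_left (h w hw) _)

end IsMatchingOn

lemma not_adj_of_maximal_isMatchingOn (hF : Maximal (IsMatchingOn G S) F)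
    (hx : x ∈ S \ F.biUnion Sym2.toFinset) (hy : y ∈ S \ F.biUnion Sym2.toFinset) :
    ¬ G.Adj x y := by
  simp only [mem_sdiff, mem_biUnion, Sym2.mem_toFinset, not_exists, not_and] at hx hy
  intro hxy
  have hinsert : IsMatchingOn G S (insert s(x, y) F) := by
    refine ⟨forall_mem_insert _ _ _ |>.2 ⟨⟨hxy, Sym2.ball.2 ⟨hx.1, hy.1⟩⟩, hF.prop.1⟩, ?_⟩
    rw [coe_insert, Set.pairwise_insert]
    refine ⟨hF.prop.2, fun e he _ ↦ ⟨?_, ?_⟩⟩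
    · exact Sym2.ball.2 ⟨hx.2 e he, hy.2 e he⟩
    · intro v hv hvxy
      obtain rfl | rfl := Sym2.mem_iff.1 hvxy
      exacts [hx.2 e he hv, hy.2 e he hv]
  exact hx.2 _ (hF.le_of_ge hinsert (subset_insert _ _) (mem_insert_self _ _))
    (Sym2.mem_mk_left x y)

end Matchings

lemma card_interedges_self_le_of_maximal_isMatchingOn [DecidableRel G.Adj] {S : Finset V}
    {F : Finset (Sym2 V)} (hF : Maximal (IsMatchingOn G S) F) (hS : G.CliqueFreeOn S 3) :
    #(G.interedges S S) + 2 * #F ^ 2 ≤ 2 * #F * #S := by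
  classical
  set W := F.biUnion Sym2.toFinset with hW
  set U := S \ W with hU
  have hcard : #S = 2 * #F + #U := hF.prop.card_eq_two_mul_add
  have hWY : ∀ Y ⊆ S, #(G.interedges W Y) ≤ #F * #Y := by
    intro Y hY
    rw [card_interedges_biUnion_left hF.prop.pairwiseDisjoint_toFinset, ← smul_eq_mul]
    refine sum_le_card_nsmul _ _ _ fun e he ↦ ?_
    have hclique := hF.prop.isNClique_toFinset he
    have := card_interedges_le_of_forall_exists_not_adj (G := G) (X := e.toFinset) (Y := Y) ?_
    · simpa [hclique.card_eq] using this
    intro y hy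
    by_contra! hadj
    refine hS ?_ (hclique.insert (a := y) fun x hx ↦ (hadj x hx).symm)
    exact mod_cast insert_subset (hY hy) (hF.prop.toFinset_subset he)
  have hUU : #(G.interedges U U) = 0 := by
    rw [card_interedges_eq_sum_left]
    refine sum_eq_zero fun x hx ↦ card_eq_zero.2 (filter_eq_empty_iff.2 fun y hy ↦ ?_)
    exact not_adj_of_maximal_isMatchingOn hF hx hy
  have hUW := hWY U sdiff_subset
  have hWS := hWY S Subset.rfl
  calc #(G.interedges S S) + 2 * #F ^ 2
      = #(G.interedges W S) + #(G.interedges W U) + 2 * #F ^ 2 := by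
        have hSW := hF.prop.card_interedges_eq_add S
        have hSU := hF.prop.card_interedges_eq_add U
        rw [← hW, ← hU, card_interedges_comm S W, card_interedges_comm S U] at hSW
        rw [← hW, ← hU, hUU, card_interedges_comm U W] at hSU
        omega
    _ ≤ #F * #S + #F * #U + 2 * #F ^ 2 := by gcongr
    _ = 2 * #F * #S := by rw [hcard]; ring


/-- A family of pairwise vertex-disjoint triangles, each encoded by its set of vertices. -/
structure IsTrianglePacking (G : SimpleGraph V) (P : Finset (Finset V)) : Prop where
  isNClique : ∀ T ∈ P, G.IsNClique 3 T
  pairwiseDisjoint : (P : Set (Finset V)).PairwiseDisjoint id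

/-- A triangle packing with the largest possible number of triangles. -/
structure IsMaximumTrianglePacking (G : SimpleGraph V) (P : Finset (Finset V)) : Prop
    extends IsTrianglePacking G P where
  card_le : ∀ Q, IsTrianglePacking G Q → #Q ≤ #P

/-- The vertices lying in no member of `P`; for a triangle packing this is the vertex set of the
graph `D` of the paper. -/
def uncovered [Fintype V] [DecidableEq V] (P : Finset (Finset V)) : Finset V :=
  (P.biUnion id)ᶜ

/-- The set `T` has a vertex friendly with two distinct edges of `F`; the set `A` of the paper
consists of the triangles with this property. -/
def IsDoublyFriendly (G : SimpleGraph V) (F : Finset (Sym2 V)) (T : Finset V) : Prop :=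
  ∃ w ∈ T, ∃ e₁ ∈ F, ∃ e₂ ∈ F, e₁ ≠ e₂ ∧ Friendly G w e₁ ∧ Friendly G w e₂

instance [DecidableEq V] [DecidableRel G.Adj] {F : Finset (Sym2 V)} {T : Finset V} :
    Decidable (IsDoublyFriendly G F T) :=
  inferInstanceAs (Decidable (∃ w ∈ T, ∃ e₁ ∈ F, ∃ e₂ ∈ F, _))

lemma IsDoublyFriendly.exists_friendly_ne {F : Finset (Sym2 V)} {T : Finset V}
    (hT : IsDoublyFriendly G F T) : ∃ w ∈ T, ∀ e, ∃ e' ∈ F, e ≠ e' ∧ Friendly G w e' := by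
  obtain ⟨w, hw, e₁, he₁, e₂, he₂, hne, hw₁, hw₂⟩ := hT
  refine ⟨w, hw, fun e ↦ ?_⟩
  obtain rfl | h := eq_or_ne e e₁
  exacts [⟨e₂, he₂, hne, hw₂⟩, ⟨e₁, he₁, h, hw₁⟩]

namespace IsTrianglePacking

variable {P Q : Finset (Finset V)} {T : Finset V}

lemma nonempty (hP : IsTrianglePacking G P) (hT : T ∈ P) : T.Nonempty :=
  card_pos.1 ((hP.isNClique T hT).card_eq ▸ three_pos)

lemma mono (hP : IsTrianglePacking G P) (h : Q ⊆ P) : IsTrianglePacking G Q where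
  isNClique T hT := hP.isNClique T (h hT)
  pairwiseDisjoint := hP.pairwiseDisjoint.subset (coe_subset.2 h)

lemma singleton (hT : G.IsNClique 3 T) : IsTrianglePacking G {T} := ⟨by simpa, by simp⟩

variable [DecidableEq V]

lemma insert (hP : IsTrianglePacking G P) (hT : G.IsNClique 3 T)
    (hdisj : ∀ T' ∈ P, Disjoint T T') : IsTrianglePacking G (insert T P) where
  isNClique := forall_mem_insert _ _ _ |>.2 ⟨hT, hP.isNClique⟩
  pairwiseDisjoint := by
    rw [coe_insert]
    exact hP.pairwiseDisjoint.insert fun T' hT' _ ↦ hdisj T' hT'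

lemma card_biUnion (hP : IsTrianglePacking G P) : #(P.biUnion id) = 3 * #P := by
  rw [Finset.card_biUnion hP.pairwiseDisjoint,
    sum_const_nat fun T hT ↦ by exact (hP.isNClique T hT).card_eq, mul_comm]

lemma interedges_biUnion [DecidableRel G.Adj] (hP : IsTrianglePacking G P) (Y : Finset V) :
    #(G.interedges (P.biUnion id) Y) = ∑ T ∈ P, #(G.interedges T Y) :=
  card_interedges_biUnion_left hP.pairwiseDisjoint Y

end IsTrianglePacking

namespace IsMaximumTrianglePacking

variable [Fintype V] [DecidableEq V] {P Q R : Finset (Finset V)} {F : Finset (Sym2 V)}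
  {T T' T₁ T₂ T₃ : Finset V} {e e' : Sym2 V} {a a' b u : V}

lemma card_le_card_of_subset (hP : IsMaximumTrianglePacking G P) (hRP : R ⊆ P)
    (hQ : IsTrianglePacking G Q) (hQR : ∀ T ∈ Q, T ⊆ uncovered P ∪ R.biUnion id) : #Q ≤ #R := by
  have hdisj : ∀ T ∈ P \ R, ∀ T' ∈ Q, Disjoint T T' := by
    intro T hT T' hT'
    rw [mem_sdiff] at hT
    refine Disjoint.mono_right (hQR T' hT') (disjoint_union_right.2 ⟨?_, ?_⟩)
    · exact disjoint_compl_right.mono_left (subset_biUnion_of_mem id hT.1)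
    · exact (disjoint_biUnion_right _ _ _).2 fun T'' hT'' ↦
        hP.pairwiseDisjoint hT.1 (hRP hT'') fun h ↦ hT.2 (h ▸ hT'')
  have hunion : IsTrianglePacking G (P \ R ∪ Q) := by
    refine ⟨forall_mem_union.2 ⟨(hP.mono sdiff_subset).isNClique, hQ.isNClique⟩, ?_⟩
    rw [coe_union]
    exact (hP.mono sdiff_subset).pairwiseDisjoint.union hQ.pairwiseDisjoint
      fun T hT T' hT' _ ↦ hdisj T hT T' hT'
  have hcard : #(P \ R ∪ Q) = #(P \ R) + #Q := by
    refine card_union_of_disjoint (disjoint_left.2 fun T hT hTQ ↦ ?_)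
    exact (hQ.nonempty hTQ).ne_empty (disjoint_self.1 (hdisj T hT T hTQ))
  have := hP.card_le _ hunion
  have := card_sdiff_add_card_eq_card hRP
  omega

lemma cliqueFreeOn_uncovered (hP : IsMaximumTrianglePacking G P) :
    G.CliqueFreeOn (uncovered P) 3 := by
  intro T hTD hT
  have := hP.card_le_card_of_subset (empty_subset P)
    (.singleton hT) (by simpa using hTD)
  simp at this

lemma not_disjoint_of_subset (hP : IsMaximumTrianglePacking G P) (hT : T ∈ P)
    (h₁ : G.IsNClique 3 T₁) (h₂ : G.IsNClique 3 T₂) (hD₁ : T₁ ⊆ uncovered P ∪ T)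
    (hD₂ : T₂ ⊆ uncovered P ∪ T) : ¬ Disjoint T₁ T₂ := by
  intro h₁₂
  have hQ : IsTrianglePacking G {T₁, T₂} := .insert (.singleton h₂) h₁ (by simpa using h₁₂)
  have hcard : #{T₁, T₂} = 2 := card_pair fun h ↦
    (hQ.nonempty (mem_insert_self _ _)).ne_empty (disjoint_self.1 (h ▸ h₁₂))
  have := hP.card_le_card_of_subset (singleton_subset_iff.2 hT) hQ (by simp [hD₁, hD₂])
  rw [hcard, card_singleton] at this
  omega

lemma not_disjoint_of_subset_union (hP : IsMaximumTrianglePacking G P) (hT : T ∈ P)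
    (hT' : T' ∈ P) (h₁ : G.IsNClique 3 T₁) (h₂ : G.IsNClique 3 T₂) (h₃ : G.IsNClique 3 T₃)
    (hD₁ : T₁ ⊆ uncovered P ∪ (T ∪ T')) (hD₂ : T₂ ⊆ uncovered P ∪ (T ∪ T'))
    (hD₃ : T₃ ⊆ uncovered P ∪ (T ∪ T')) (h₁₂ : Disjoint T₁ T₂) (h₁₃ : Disjoint T₁ T₃) :
    ¬ Disjoint T₂ T₃ := by
  intro h₂₃
  have hne : ∀ {S S' : Finset V}, G.IsNClique 3 S → Disjoint S S' → S ≠ S' := by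
    rintro S _ hS hSS' rfl
    exact ((IsTrianglePacking.singleton hS).nonempty (mem_singleton_self S)).ne_empty
      (disjoint_self.1 hSS')
  have hQ : IsTrianglePacking G {T₁, T₂, T₃} :=
    .insert (.insert (.singleton h₃) h₂ (by simpa using h₂₃)) h₁ (by simp [h₁₂, h₁₃])
  have hcard : #{T₁, T₂, T₃} = 3 := card_eq_three.2
    ⟨T₁, T₂, T₃, hne h₁ h₁₂, hne h₁ h₁₃, hne h₂ h₂₃, rfl⟩
  have := hP.card_le_card_of_subset (R := {T, T'}) (by simp [insert_subset_iff, hT, hT']) hQ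
    (by simp [hD₁, hD₂, hD₃])
  have := card_le_two (a := T) (b := T')
  omega

lemma disjoint_uncovered (hT : T ∈ P) : Disjoint T (uncovered P) :=
  disjoint_compl_right.mono_left (subset_biUnion_of_mem id hT)

lemma not_friendly_of_friendly (hP : IsMaximumTrianglePacking G P)
    (hF : IsMatchingOn G (uncovered P) F) (hT : T ∈ P) (ha : a ∈ T) (hb : b ∈ T) (hab : a ≠ b)
    (he : e ∈ F) (he' : e' ∈ F) (hne : e ≠ e') (hae : Friendly G a e) : ¬ Friendly G b e' := by
  intro hbe'
  have hD := hF.toFinset_subset he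
  have hD' := hF.toFinset_subset he'
  have hTD := disjoint_left.1 (disjoint_uncovered hT)
  have hdisj := hF.pairwiseDisjoint_toFinset he he' hne
  refine hP.not_disjoint_of_subset hT (hae.isNClique_insert (hF.isNClique_toFinset he))
    (hbe'.isNClique_insert (hF.isNClique_toFinset he')) ?_ ?_ ?_
  · grind
  · grind
  · simp only [disjoint_insert_left, disjoint_insert_right]
    grind

lemma exists_mem_erase_not_adj_of_friendly (hP : IsMaximumTrianglePacking G P)
    (hF : IsMatchingOn G (uncovered P) F) (hT : T ∈ P) (ha : a ∈ T) (he : e ∈ F)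
    (hae : Friendly G a e) (hu : u ∈ uncovered P) (hue : u ∉ e.toFinset) :
    ∃ x ∈ T.erase a, ¬ G.Adj x u := by
  by_contra! hadj
  have hD := hF.toFinset_subset he
  have hTD := disjoint_left.1 (disjoint_uncovered hT)
  refine hP.not_disjoint_of_subset hT (hae.isNClique_insert (hF.isNClique_toFinset he))
    (((hP.isNClique T hT).erase_of_mem ha).insert fun x hx ↦ (hadj x hx).symm) ?_ ?_ ?_
  · grind
  · grind
  · simp only [disjoint_left]
    grind

lemma exists_mem_erase_not_adj_of_friendly_of_friendly (hP : IsMaximumTrianglePacking G P)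
    (hF : IsMatchingOn G (uncovered P) F) (hT : T ∈ P) (hT' : T' ∈ P) (hTT' : T ≠ T')
    (ha : a ∈ T) (ha' : a' ∈ T') (he : e ∈ F) (he' : e' ∈ F) (hne : e ≠ e')
    (hae : Friendly G a e) (hae' : Friendly G a' e') (hu : u ∈ T'.erase a') :
    ∃ x ∈ T.erase a, ¬ G.Adj x u := by
  by_contra! hadj
  have hD := hF.toFinset_subset he
  have hD' := hF.toFinset_subset he'
  have hTD := disjoint_left.1 (disjoint_uncovered hT)
  have hTD' := disjoint_left.1 (disjoint_uncovered hT')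
  have hee' := hF.pairwiseDisjoint_toFinset he he' hne
  have hdisj : Disjoint T T' := hP.pairwiseDisjoint hT hT' hTT'
  rw [disjoint_left] at hdisj
  refine hP.not_disjoint_of_subset_union hT hT'
    (hae.isNClique_insert (hF.isNClique_toFinset he))
    (hae'.isNClique_insert (hF.isNClique_toFinset he'))
    (((hP.isNClique T hT).erase_of_mem ha).insert fun x hx ↦ (hadj x hx).symm) ?_ ?_ ?_ ?_ ?_ ?_
  · grind
  · grind
  · grind
  · simp only [disjoint_insert_left, disjoint_insert_right]
    grind
  · simp only [disjoint_left]
    grind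
  · simp only [disjoint_left]
    grind

end IsMaximumTrianglePacking

lemma IsMatchingOn.card_interedges_add_le_of_not_isDoublyFriendly [DecidableRel G.Adj]
    {S T : Finset V} {F : Finset (Sym2 V)} (hF : IsMatchingOn G S F)
    (hT : ¬ IsDoublyFriendly G F T) :
    #(G.interedges T S) + #T * #F ≤ #T * #S + #T := by
  classical
  have hW : #(G.interedges T (F.biUnion Sym2.toFinset)) ≤ #T * (#F + 1) := by
    refine hF.card_interedges_biUnion_le fun w hw ↦ card_le_one.2 fun e₁ h₁ e₂ h₂ ↦ ?_
    rw [mem_filter] at h₁ h₂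
    by_contra hne
    exact hT ⟨w, hw, e₁, h₁.1, e₂, h₂.1, hne, h₁.2, h₂.2⟩
  have hU := G.card_interedges_le_mul T (S \ F.biUnion Sym2.toFinset)
  rw [hF.card_interedges_eq_add, hF.card_eq_two_mul_add]
  linarith

section Counting

variable [DecidableEq V] [DecidableRel G.Adj]

namespace IsTrianglePacking

variable {P : Finset (Finset V)} {T : Finset V}

lemma card_interedges_biUnion_add_three_le (hP : IsTrianglePacking G P) (hT : T ∈ P) :
    #(G.interedges T (P.biUnion id)) + 3 ≤ 9 * #P := by
  have h := card_interedges_le_of_subset (G := G) (subset_biUnion_of_mem id hT)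
  have hpos : 0 < #P := card_pos.2 ⟨T, hT⟩
  rw [hP.card_biUnion, id, (hP.isNClique T hT).card_eq] at h
  omega

end IsTrianglePacking

namespace IsMaximumTrianglePacking

variable [Fintype V] {P : Finset (Finset V)} {F : Finset (Sym2 V)} {T T' : Finset V}

lemma card_interedges_uncovered_le (hP : IsMaximumTrianglePacking G P)
    (hF : IsMatchingOn G (uncovered P) F) (hT : T ∈ P) (hTF : IsDoublyFriendly G F T) :
    #(G.interedges T (uncovered P)) ≤ 2 * #(uncovered P) := by
  obtain ⟨a, ha, hfriend⟩ := hTF.exists_friendly_ne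
  have herase : #(T.erase a) = 2 := ((hP.isNClique T hT).erase_of_mem ha).card_eq
  have hW : #(G.interedges (T.erase a) (F.biUnion Sym2.toFinset)) ≤ #(T.erase a) * (#F + 0) := by
    refine hF.card_interedges_biUnion_le fun b hb ↦ (card_eq_zero.2 ?_).le
    refine filter_eq_empty_iff.2 fun e he ↦ ?_
    obtain ⟨e', he', hne, hae'⟩ := hfriend e
    exact hP.not_friendly_of_friendly hF hT ha (mem_of_mem_erase hb) (ne_of_mem_erase hb).symm
      he' he hne.symm hae'
  have hU : #(G.interedges (T.erase a) (uncovered P \ F.biUnion Sym2.toFinset)) ≤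
      (#(T.erase a) - 1) * #(uncovered P \ F.biUnion Sym2.toFinset) := by
    refine card_interedges_le_of_forall_exists_not_adj fun u hu ↦ ?_
    rw [mem_sdiff, mem_biUnion] at hu
    obtain ⟨e, he, -, hae⟩ := hfriend s(a, a)
    exact hP.exists_mem_erase_not_adj_of_friendly hF hT ha he hae hu.1 fun hue ↦ hu.2 ⟨e, he, hue⟩
  have ha' := G.card_interedges_le_mul {a} (uncovered P)
  have hcard := hF.card_eq_two_mul_add
  rw [← insert_erase ha, insert_eq, card_interedges_union_left (by simp),
    hF.card_interedges_eq_add (T.erase a)]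
  rw [herase] at hW hU
  rw [card_singleton] at ha'
  omega

lemma card_interedges_le_seven (hP : IsMaximumTrianglePacking G P)
    (hF : IsMatchingOn G (uncovered P) F) (hT : T ∈ P) (hT' : T' ∈ P) (hTT' : T ≠ T')
    (hTF : IsDoublyFriendly G F T) (hTF' : IsDoublyFriendly G F T') :
    #(G.interedges T T') ≤ 7 := by
  obtain ⟨a, ha, hfriend⟩ := hTF.exists_friendly_ne
  obtain ⟨a', ha', hfriend'⟩ := hTF'.exists_friendly_ne
  obtain ⟨e, he, -, hae⟩ := hfriend s(a, a)
  obtain ⟨e', he', hne, hae'⟩ := hfriend' e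
  have hrest : #(G.interedges (T.erase a) (T'.erase a')) ≤ (#(T.erase a) - 1) * #(T'.erase a') :=
    card_interedges_le_of_forall_exists_not_adj fun u hu ↦
      hP.exists_mem_erase_not_adj_of_friendly_of_friendly hF hT hT' hTT' ha ha' he he' hne
        hae hae' hu
  have hleft := G.card_interedges_le_mul {a} T'
  have hright := G.card_interedges_le_mul (T.erase a) {a'}
  have hsplit : #(G.interedges T T') = #(G.interedges {a} T') +
      (#(G.interedges (T.erase a) {a'}) + #(G.interedges (T.erase a) (T'.erase a'))) := by
    rw [← card_interedges_union_right _ (by simp), ← insert_eq, insert_erase ha',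
      ← card_interedges_union_left (by simp), ← insert_eq, insert_erase ha]
  rw [((hP.isNClique T hT).erase_of_mem ha).card_eq] at hright hrest
  rw [((hP.isNClique T' hT').erase_of_mem ha').card_eq] at hrest
  rw [(hP.isNClique T' hT').card_eq, card_singleton] at hleft
  rw [card_singleton] at hright
  omega

lemma card_interedges_biUnion_add_le (hP : IsMaximumTrianglePacking G P)
    (hF : IsMatchingOn G (uncovered P) F) (hT : T ∈ P) (hTF : IsDoublyFriendly G F T) :
    #(G.interedges T (P.biUnion id)) + (2 * #(P.filter (IsDoublyFriendly G F)) + 1) ≤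
      9 * #P := by
  have hself : #(G.interedges T T) ≤ 6 := by
    simpa [(hP.isNClique T hT).card_eq] using card_interedges_le_of_subset (G := G) (Subset.refl T)
  have hother : ∀ T' ∈ P.erase T,
      #(G.interedges T T') + (if IsDoublyFriendly G F T' then 2 else 0) ≤ 9 := by
    intro T' hT'
    rw [mem_erase] at hT'
    split_ifs with hTF'
    · have := hP.card_interedges_le_seven hF hT hT'.2 hT'.1.symm hTF hTF'
      omega
    · simpa [(hP.isNClique T hT).card_eq, (hP.isNClique T' hT'.2).card_eq]
        using G.card_interedges_le_mul T T'
  have hsum := sum_le_card_nsmul _ _ _ hother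
  rw [sum_add_distrib, ← sum_filter, sum_const, filter_erase,
    card_erase_of_mem (mem_filter.2 ⟨hT, hTF⟩), card_erase_of_mem hT, smul_eq_mul,
    smul_eq_mul] at hsum
  rw [card_interedges_biUnion_right T hP.pairwiseDisjoint, ← add_sum_erase P _ hT]
  have := card_pos.2 ⟨T, mem_filter.2 ⟨hT, hTF⟩⟩
  have := card_pos.2 ⟨T, hT⟩
  simp only [id]
  omega

lemma card_interedges_biUnion_self_add_le (hP : IsMaximumTrianglePacking G P)
    (hF : IsMatchingOn G (uncovered P) F) :
    #(G.interedges (P.biUnion id) (P.biUnion id)) +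
        (#(P.filter (IsDoublyFriendly G F)) * (2 * #(P.filter (IsDoublyFriendly G F)) + 1) +
          #(P.filter fun T ↦ ¬ IsDoublyFriendly G F T) * 3) ≤ 9 * #P ^ 2 := by
  have hT : ∀ T ∈ P, #(G.interedges T (P.biUnion id)) +
      (if IsDoublyFriendly G F T then 2 * #(P.filter (IsDoublyFriendly G F)) + 1 else 3) ≤
        9 * #P := by
    intro T hT
    split_ifs with hTF
    · exact hP.card_interedges_biUnion_add_le hF hT hTF
    · exact hP.card_interedges_biUnion_add_three_le hT
  have hsum := sum_le_card_nsmul _ _ _ hT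
  rw [sum_add_distrib, sum_ite, sum_const, sum_const, smul_eq_mul, smul_eq_mul, smul_eq_mul,
    ← hP.interedges_biUnion] at hsum
  linarith

lemma card_interedges_biUnion_uncovered_add_le (hP : IsMaximumTrianglePacking G P)
    (hF : IsMatchingOn G (uncovered P) F) :
    #(G.interedges (P.biUnion id) (uncovered P)) +
        3 * #(P.filter fun T ↦ ¬ IsDoublyFriendly G F T) * #F ≤
      2 * #(P.filter (IsDoublyFriendly G F)) * #(uncovered P) +
        3 * #(P.filter fun T ↦ ¬ IsDoublyFriendly G F T) * (#(uncovered P) + 1) := by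
  have hfriendly : ∑ T ∈ P.filter (IsDoublyFriendly G F), #(G.interedges T (uncovered P)) ≤
      #(P.filter (IsDoublyFriendly G F)) • (2 * #(uncovered P)) := by
    refine sum_le_card_nsmul _ _ _ fun T hT ↦ ?_
    rw [mem_filter] at hT
    exact hP.card_interedges_uncovered_le hF hT.1 hT.2
  have hother : ∑ T ∈ P.filter (fun T ↦ ¬ IsDoublyFriendly G F T),
      (#(G.interedges T (uncovered P)) + 3 * #F) ≤
        #(P.filter fun T ↦ ¬ IsDoublyFriendly G F T) • (3 * #(uncovered P) + 3) := by
    refine sum_le_card_nsmul _ _ _ fun T hT ↦ ?_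
    rw [mem_filter] at hT
    have := hF.card_interedges_add_le_of_not_isDoublyFriendly hT.2
    rwa [(hP.isNClique T hT.1).card_eq] at this
  rw [sum_add_distrib, sum_const] at hother
  rw [hP.interedges_biUnion, ← sum_filter_add_sum_filter_not P (IsDoublyFriendly G F)]
  simp only [smul_eq_mul] at hfriendly hother
  linarith

lemma two_mul_ncard_edgeSet_add_le {a b : ℕ} (hP : IsMaximumTrianglePacking G P)
    (hF : Maximal (IsMatchingOn G (uncovered P)) F)
    (ha : #(P.filter (IsDoublyFriendly G F)) = a)
    (hb : #(P.filter fun T ↦ ¬ IsDoublyFriendly G F T) = b) :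
    2 * G.edgeSet.ncard + (2 * a ^ 2 + a + 3 * b) + 6 * b * #F + 2 * #F ^ 2 ≤
      9 * (a + b) ^ 2 + 2 * #(uncovered P) * (2 * a + 3 * b + #F) + 6 * b := by
  have hcovered := hP.card_interedges_biUnion_self_add_le hF.prop
  have hcross := hP.card_interedges_biUnion_uncovered_add_le hF.prop
  have huncovered := card_interedges_self_le_of_maximal_isMatchingOn hF hP.cliqueFreeOn_uncovered
  have hcard : #P = a + b := by
    rw [← ha, ← hb, card_filter_add_card_filter_not]
  rw [ha, hb, hcard] at hcovered
  rw [ha, hb] at hcross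
  rw [two_mul_ncard_edgeSet_eq (P.biUnion id), ← uncovered]
  linarith

end IsMaximumTrianglePacking

end Counting

section Arithmetic

variable {t x E N m a b : ℕ}

lemma four_mul_add_of_choose_two_add_le (h : t.choose 2 + t * x + x ^ 2 / 4 + 2 ≤ E) :
    2 * t ^ 2 + 4 * t * x + x ^ 2 + 5 ≤ 4 * E + 2 * t := by
  have hchoose : 2 * t.choose 2 + t = t ^ 2 := by
    qify
    rw [Nat.cast_choose_two]
    ring
  have hfloor : x ^ 2 ≤ 4 * (x ^ 2 / 4) + 3 := by omega
  linarith

lemma le_one_of_edge_bounds (hab : a + b = t + 1) (hN : 10 * t + 26 ≤ N)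
    (hlower : t.choose 2 + t * (N + 2 * t + 3) + (N + 2 * t + 3) ^ 2 / 4 + 2 ≤ E)
    (hupper : 2 * E + (2 * a ^ 2 + a + 3 * b) + 6 * b * m + 2 * m ^ 2 ≤
      9 * (a + b) ^ 2 + 2 * N * (2 * a + 3 * b + m) + 6 * b) : b ≤ 1 := by
  have hlower := four_mul_add_of_choose_two_add_le hlower
  by_contra! hb
  obtain ⟨c, rfl⟩ := Nat.exists_eq_add_of_le hb
  obtain rfl : t = a + c + 1 := by omega
  zify at *
  -- The upper bound is weakest at `m = (N - 3b) / 2`, where `b = c + 2`.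
  have hsq : 0 ≤ ((N : ℤ) - 3 * (c + 2) - 2 * m) ^ 2 := sq_nonneg _
  have hlinear :
      2 * (c + 1) * (N : ℤ) ≤ 8 * a * (c + 2) + 13 * (c + 2) ^ 2 + 12 * (c + 2) + 4 * a - 6 := by
    linarith
  have hmul := mul_le_mul_of_nonneg_left hN (by positivity : (0 : ℤ) ≤ 2 * (c + 1))
  nlinarith [hlinear, hmul, mul_nonneg (Nat.cast_nonneg (α := ℤ) a) (Nat.cast_nonneg (α := ℤ) c)]

end Arithmetic

lemma IsMaximumTrianglePacking.card_filter_not_isDoublyFriendly_le_one [Fintype V] [DecidableEq V]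
    [DecidableRel G.Adj] {P : Finset (Finset V)} {F : Finset (Sym2 V)} {t : ℕ}
    (hP : IsMaximumTrianglePacking G P) (hF : Maximal (IsMatchingOn G (uncovered P)) F)
    (hcard : #P = t + 1) (hn : 13 * t + 29 ≤ Fintype.card V)
    (he : t.choose 2 + t * (Fintype.card V - t) + (Fintype.card V - t) ^ 2 / 4 + 2 ≤
      G.edgeSet.ncard) :
    #(P.filter fun T ↦ ¬ IsDoublyFriendly G F T) ≤ 1 := by
  have hV : 3 * #P + #(uncovered P) = Fintype.card V := by
    rw [← hP.card_biUnion, uncovered, card_add_card_compl]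
  have hsub : Fintype.card V - t = #(uncovered P) + 2 * t + 3 := by omega
  rw [hsub] at he
  refine le_one_of_edge_bounds ?_ ?_ he (hP.two_mul_ncard_edgeSet_add_le hF rfl rfl)
  · rw [card_filter_add_card_filter_not, hcard]
  · omega

lemma IsTrianglePacking.hasIndepTriangles {P : Finset (Finset V)} (hP : IsTrianglePacking G P) :
    HasIndepTriangles G #P := by
  let T (i : Fin #P) : P := P.equivFin.symm i
  have hT (i) : G.IsNClique 3 (T i : Finset V) := hP.isNClique _ (T i).2
  let v (i : Fin #P) : Fin 3 ≃ (T i : Finset V) := ((T i).1.equivFinOfCardEq (hT i).card_eq).symm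
  refine ⟨fun i j ↦ v i j, ?_, fun i ↦ ?_⟩
  · rintro ⟨i, j⟩ ⟨i', j'⟩ (h : (v i j : V) = v i' j')
    have hTT' : (T i : Finset V) = T i' :=
      hP.pairwiseDisjoint.elim_finset (T i).2 (T i').2 _ (v i j).2 (h ▸ (v i' j').2)
    obtain rfl : i = i' := P.equivFin.symm.injective (Subtype.ext hTT')
    rw [(v i).injective (Subtype.ext h)]
  · have hadj {j j' : Fin 3} (hne : j ≠ j') : G.Adj (v i j) (v i j') :=
      (hT i).isClique (v i j).2 (v i j').2 fun h ↦ hne ((v i).injective (Subtype.ext h))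
    exact ⟨hadj (by decide), hadj (by decide), hadj (by decide)⟩

lemma IsTrianglePacking.isMaximumTrianglePacking {P : Finset (Finset V)}
    (hP : IsTrianglePacking G P) (hG : ¬ HasIndepTriangles G (#P + 1)) :
    IsMaximumTrianglePacking G P where
  toIsTrianglePacking := hP
  card_le Q hQ := by
    by_contra! hlt
    obtain ⟨R, hRQ, hR : #R = #P + 1⟩ := exists_subset_card_eq (Nat.succ_le_of_lt hlt)
    exact hG (hR ▸ (hQ.mono hRQ).hasIndepTriangles)

/-- The vertex sets of a family of triangles given by their corners, the encoding used in
`HasIndepTriangles`. -/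
def triangleSets {ι : Type*} [Fintype ι] [DecidableEq V] (f : ι → Fin 3 → V) :
    Finset (Finset V) :=
  univ.image fun i ↦ univ.image (f i)

section TriangleSets

variable {ι : Type*} [Fintype ι] [DecidableEq V] {f : ι → Fin 3 → V}

lemma card_triangleSets (hinj : Function.Injective fun p : ι × Fin 3 ↦ f p.1 p.2) :
    #(triangleSets f) = Fintype.card ι := by
  refine card_image_of_injective _ fun i i' h ↦ ?_
  obtain ⟨j, -, hj⟩ := mem_image.1 (h ▸ mem_image_of_mem (f i) (mem_univ 0))
  exact (congrArg Prod.fst (@hinj (i', j) (i, 0) hj)).symm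

lemma isTrianglePacking_triangleSets (hinj : Function.Injective fun p : ι × Fin 3 ↦ f p.1 p.2)
    (htri : ∀ i, G.Adj (f i 0) (f i 1) ∧ G.Adj (f i 1) (f i 2) ∧ G.Adj (f i 0) (f i 2)) :
    IsTrianglePacking G (triangleSets f) where
  isNClique := forall_mem_image.2 fun i _ ↦ SimpleGraph.is3Clique_iff.2
    ⟨f i 0, f i 1, f i 2, (htri i).1, (htri i).2.2, (htri i).2.1, by
      ext; simp [Fin.exists_fin_succ, eq_comm]⟩
  pairwiseDisjoint := by
    rintro _ hT _ hT' hne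
    obtain ⟨i, -, rfl⟩ := mem_image.1 hT
    obtain ⟨i', -, rfl⟩ := mem_image.1 hT'
    refine disjoint_left.2 fun x hx hx' ↦ hne ?_
    obtain ⟨j, -, rfl⟩ := mem_image.1 hx
    obtain ⟨j', -, hj'⟩ := mem_image.1 hx'
    obtain rfl : i' = i := congrArg Prod.fst (@hinj (i', j') (i, j) hj')
    rfl

lemma coe_uncovered_triangleSets [Fintype V] :
    (uncovered (triangleSets f) : Set V) = {x | ∀ i j, f i j ≠ x} := by
  ext x
  simp [uncovered, triangleSets]

lemma card_filter_triangleSets_le (p : Finset V → Prop) [DecidablePred p] :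
    #((triangleSets f).filter p) ≤ #{i | p (univ.image (f i))} := by
  rw [triangleSets, filter_image]
  exact card_image_le

end TriangleSets

theorem claim1_A_large_general [Fintype V] (t : ℕ) (hn : 13 * t + 29 ≤ Fintype.card V)
    (G : SimpleGraph V)
    (he : t.choose 2 + t * (Fintype.card V - t) + (Fintype.card V - t) ^ 2 / 4 + 2 ≤
      G.edgeSet.ncard)
    (hG : ¬ HasIndepTriangles G (t + 2)) (f : Fin (t + 1) → Fin 3 → V)
    (hinj : Function.Injective fun p : Fin (t + 1) × Fin 3 ↦ f p.1 p.2)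
    (htri : ∀ i, G.Adj (f i 0) (f i 1) ∧ G.Adj (f i 1) (f i 2) ∧ G.Adj (f i 0) (f i 2))
    (F : Finset (Sym2 V)) (hF : Maximal (IsMatchingOn G {x | ∀ i j, f i j ≠ x}) F)
    (A : Finset (Fin (t + 1)))
    (hA : ∀ i, i ∈ A ↔ ∃ j, ∃ e₁ ∈ F, ∃ e₂ ∈ F,
      e₁ ≠ e₂ ∧ Friendly G (f i j) e₁ ∧ Friendly G (f i j) e₂) :
    t ≤ #A := by
  classical
  have hcard : #(triangleSets f) = t + 1 := by rw [card_triangleSets hinj, Fintype.card_fin]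
  have hP : IsMaximumTrianglePacking G (triangleSets f) :=
    (isTrianglePacking_triangleSets hinj htri).isMaximumTrianglePacking (by rwa [hcard])
  rw [← coe_uncovered_triangleSets] at hF
  have hother := hP.card_filter_not_isDoublyFriendly_le_one hF hcard hn he
  have hfriendly : #((triangleSets f).filter (IsDoublyFriendly G F)) ≤ #A := by
    convert card_filter_triangleSets_le (IsDoublyFriendly G F)
    ext i
    simp [hA, IsDoublyFriendly]
  have hsum := card_filter_add_card_filter_not (s := triangleSets f) (IsDoublyFriendly G F)
  omega

/-- Claim 1: for `n ≥ 15t + 57` and `G` on `n` vertices with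
`e(G) ≥ C(t,2) + t(n-t) + ⌊(n-t)²/4⌋ + 2` edges and no `t+2` disjoint triangles, for any
family `M` of `t+1` disjoint triangles, maximum matching `F` of `D`, and `A` the set of
triangles of `M` containing a vertex friendly with two edges of `F`: `|A| ≥ t`. -/
theorem claim1_A_large (t n : ℕ) (hn : 15 * t + 57 ≤ n) (G : SimpleGraph (Fin n))
    (he : t.choose 2 + t * (n - t) + (n - t) ^ 2 / 4 + 2 ≤ G.edgeSet.ncard)
    (hG : ¬ HasIndepTriangles G (t + 2))
    (f : Fin (t + 1) → Fin 3 → Fin n)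
    (hinj : Function.Injective fun p : Fin (t + 1) × Fin 3 => f p.1 p.2)
    (htri : ∀ i, G.Adj (f i 0) (f i 1) ∧ G.Adj (f i 1) (f i 2) ∧ G.Adj (f i 0) (f i 2))
    (Dset : Set (Fin n)) (hDset : Dset = {x | ∀ i j, f i j ≠ x})
    (F : Finset (Sym2 (Fin n))) (hF : IsMatchingOn G Dset F)
    (hFmax : ∀ F' : Finset (Sym2 (Fin n)), IsMatchingOn G Dset F' → F'.card ≤ F.card)
    (A : Finset (Fin (t + 1)))
    (hA : ∀ i, i ∈ A ↔ ∃ j : Fin 3, ∃ e₁ ∈ F, ∃ e₂ ∈ F,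
      e₁ ≠ e₂ ∧ Friendly G (f i j) e₁ ∧ Friendly G (f i j) e₂) :
    t ≤ A.card := by
  subst hDset
  exact claim1_A_large_general t (by rw [Fintype.card_fin]; omega) G (by rwa [Fintype.card_fin])
    hG f hinj htri F
    ⟨hF, fun F' hF' hle ↦ (eq_of_subset_of_card_le hle (hFmax F' hF')).ge⟩ A hA
end
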